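/- arXiv:1811.11660 — 5 statements merged into one kernel-verified Lean document; each statement's English description precedes it below -/
import Mathlib

section
/- Let (Q, Σ) be a DFA with n = |Q|. Suppose there exists a word u over Σ with |u| ≤ 3 and |Qu| ≤ n − 2, and suppose there exists a word w over Σ with |Qw| ≤ n − 3. Then there exists a word w over Σ with |w| ≤ 9 and |Qw| ≤ n − 3. -/
/-- The image of a finite set of states `R` under a word (list of letters),
where each letter `s` acts on states via `act s`. -/
def wordImage {Q A : Type*} [DecidableEq Q] (act : A → Q → Q) (R : Finset Q) :
    List A → Finset Q
  | [] => R
  | s :: w => wordImage act (R.image (act s)) w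

/-!
Reading `u` leads to a set `R` of at most `n - 2` states; suppose it has exactly `n - 2`. Some word
merges two states of `R`; let `v` be a shortest one, merging `p` and `q`. After `i` letters of `v`
the set `R` has become a set `Rᵢ` with a two-element complement `Bᵢ`, and `{p, q}` has become a
two-element subset `Aᵢ` of `Rᵢ`. If `j < i` and `Aᵢ` were contained in `Rⱼ`, then omitting the
letters of `v` between positions `j` and `i` would give a shorter word merging two states of `R`;
so `Aᵢ` meets `Bⱼ`. The skew Bollobás set-pair inequality, proved by the polynomial
method, therefore bounds the length of `v` by `(2 + 2).choose 2 = 6`.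
-/

open Finset

section SkewBollobas

open MvPolynomial

theorem eval_eq_sum_finsuppAntidiag_of_isHomogeneous {K σ : Type*} [CommSemiring K] [Fintype σ]
    [DecidableEq σ] {r : ℕ} {F : MvPolynomial σ K} (hF : F.IsHomogeneous r) (c : σ → K) :
    eval c F = ∑ d ∈ finsuppAntidiag univ r, F.coeff d * ∏ x, c x ^ d x := by
  rw [eval_eq']
  refine sum_subset (fun d hd ↦ ?_) fun d _ hd ↦ by rw [notMem_support_iff.mp hd, zero_mul]
  rw [mem_finsuppAntidiag, ← Finsupp.degree_eq_sum]
  exact ⟨(hF.degree_eq_sum_deg_support hd).symm, subset_univ _⟩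

theorem card_le_multichoose_of_triangular_eval {K σ ι : Type*} [CommRing K] [IsDomain K]
    [Fintype σ] [Fintype ι] [LinearOrder ι] {r : ℕ} {F : ι → MvPolynomial σ K} {c : ι → σ → K}
    (hF : ∀ i, (F i).IsHomogeneous r) (hdiag : ∀ i, eval (c i) (F i) ≠ 0)
    (htri : ∀ i j, j < i → eval (c j) (F i) = 0) :
    Fintype.card ι ≤ (Fintype.card σ).multichoose r := by
  classical
  let evals : Matrix ι ι K := .of fun i j ↦ eval (c j) (F i)
  let coeffs : Matrix ι (finsuppAntidiag (univ : Finset σ) r) K := .of fun i d ↦ (F i).coeff d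
  let monomials : Matrix (finsuppAntidiag (univ : Finset σ) r) ι K :=
    .of fun d j ↦ ∏ x, c j x ^ d.1 x
  have hfactor : evals = coeffs * monomials := by
    ext i j
    simp only [evals, coeffs, monomials, Matrix.mul_apply, Matrix.of_apply,
      eval_eq_sum_finsuppAntidiag_of_isHomogeneous (hF i)]
    exact (sum_coe_sort _ fun d ↦ (F i).coeff d * ∏ x, c j x ^ d x).symm
  have hdet : evals.det ≠ 0 := by
    rw [Matrix.det_of_isUpperTriangular (M := evals) fun i j hij ↦ htri i j hij]
    exact prod_ne_zero_iff.mpr fun i _ ↦ hdiag i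
  calc
    Fintype.card ι = evals.rank := (Matrix.rank_of_det_ne_zero hdet).symm
    _ ≤ coeffs.rank := hfactor ▸ Matrix.rank_mul_le_left coeffs monomials
    _ ≤ Fintype.card (finsuppAntidiag (univ : Finset σ) r) := coeffs.rank_le_card_width
    _ = (Fintype.card σ).multichoose r := by
      rw [Fintype.card_coe, card_finsuppAntidiag_nat_eq_multichoose, card_univ]

/-- The form in the coefficients of a univariate polynomial `g` of degree less than `n` whose value
is the product of the values of `g` on `S`; it encodes `S` in the polynomial method. -/
noncomputable def evaluationForm {K : Type*} [CommSemiring K] (S : Finset K) (n : ℕ) :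
    MvPolynomial (Fin n) K :=
  ∏ x ∈ S, ∑ m : Fin n, C (x ^ (m : ℕ)) * X m

theorem isHomogeneous_evaluationForm {K : Type*} [CommSemiring K] (S : Finset K) (n : ℕ) :
    (evaluationForm S n).IsHomogeneous #S := by
  rw [card_eq_sum_ones]
  exact .prod _ _ _ fun x _ ↦ .sum _ _ _ fun m _ ↦ isHomogeneous_C_mul_X _ _

theorem eval_coeff_evaluationForm {K : Type*} [CommSemiring K] (S : Finset K) {n : ℕ}
    {g : Polynomial K} (hg : g.natDegree < n) :
    eval (fun m : Fin n ↦ g.coeff m) (evaluationForm S n) = ∏ x ∈ S, g.eval x := by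
  simp only [evaluationForm, map_prod, map_sum, map_mul, eval_C, eval_X,
    Polynomial.eval_eq_sum_range' hg, ← Fin.sum_univ_eq_sum_range, mul_comm]

theorem prod_eval_prod_X_sub_C_eq_zero_iff {K : Type*} [CommRing K] [IsDomain K]
    {S T : Finset K} :
    ∏ x ∈ S, (∏ y ∈ T, (Polynomial.X - Polynomial.C y)).eval x = 0 ↔ ¬Disjoint S T := by
  simp [Polynomial.eval_prod, prod_eq_zero_iff, sub_eq_zero, not_disjoint_iff]

theorem card_le_choose_of_skew_of_isDomain {K ι : Type*} [CommRing K] [IsDomain K] [Fintype ι]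
    [LinearOrder ι] {a b : ℕ} {S T : ι → Finset K} (hS : ∀ i, #(S i) = a) (hT : ∀ i, #(T i) = b)
    (hdisj : ∀ i, Disjoint (S i) (T i)) (hmeet : ∀ i j, j < i → ¬Disjoint (S i) (T j)) :
    Fintype.card ι ≤ (a + b).choose a := by
  let g (j : ι) : Polynomial K := ∏ y ∈ T j, (Polynomial.X - Polynomial.C y)
  have hg (j : ι) : (g j).natDegree < b + 1 := by
    rw [Polynomial.natDegree_finsetProd_X_sub_C_eq_card, hT]
    exact b.lt_succ_self
  have heval (i j : ι) :
      eval (fun m : Fin (b + 1) ↦ (g j).coeff m) (evaluationForm (S i) (b + 1)) = 0 ↔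
        ¬Disjoint (S i) (T j) := by
    rw [eval_coeff_evaluationForm _ (hg j), prod_eval_prod_X_sub_C_eq_zero_iff]
  calc
    Fintype.card ι ≤ (Fintype.card (Fin (b + 1))).multichoose a :=
      card_le_multichoose_of_triangular_eval
        (fun i ↦ hS i ▸ isHomogeneous_evaluationForm (S i) (b + 1))
        (fun i ↦ (heval i i).not_left.mpr (hdisj i)) fun i j hij ↦ (heval i j).mpr (hmeet i j hij)
    _ = (a + b).choose a := by
      rw [Fintype.card_fin, Nat.multichoose_eq]
      congr 1
      omega

theorem card_le_choose_of_skew {α ι : Type*} [Fintype ι] [LinearOrder ι] {a b : ℕ}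
    {S T : ι → Finset α} (hS : ∀ i, #(S i) = a) (hT : ∀ i, #(T i) = b)
    (hdisj : ∀ i, Disjoint (S i) (T i)) (hmeet : ∀ i j, j < i → ¬Disjoint (S i) (T j)) :
    Fintype.card ι ≤ (a + b).choose a := by
  let toPoly : α ↪ MvPolynomial α ℤ := ⟨X, X_injective⟩
  refine card_le_choose_of_skew_of_isDomain (S := fun i ↦ (S i).map toPoly)
    (T := fun i ↦ (T i).map toPoly) ?_ ?_ ?_ ?_
  · simpa only [card_map] using hS
  · simpa only [card_map] using hT
  · simpa only [disjoint_map] using hdisj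
  · simpa only [disjoint_map] using hmeet

end SkewBollobas

section Words

variable {Q A : Type*} [DecidableEq Q] {act : A → Q → Q} {R S : Finset Q} {v w : List A}

theorem wordImage_eq_image (act : A → Q → Q) (R : Finset Q) (w : List A) :
    wordImage act R w = R.image (w.foldl fun q s ↦ act s q) := by
  induction w generalizing R with
  | nil => exact image_id.symm
  | cons s w ih => rw [wordImage, ih, image_image]; rfl

theorem wordImage_append (act : A → Q → Q) (R : Finset Q) (w v : List A) :
    wordImage act R (w ++ v) = wordImage act (wordImage act R w) v := by
  induction w generalizing R with
  | nil => rfl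
  | cons s _ ih => exact ih _

theorem wordImage_mono (act : A → Q → Q) (w : List A) (hRS : R ⊆ S) :
    wordImage act R w ⊆ wordImage act S w := by
  simpa only [wordImage_eq_image] using image_subset_image hRS

theorem card_wordImage_le (act : A → Q → Q) (R : Finset Q) (w : List A) :
    #(wordImage act R w) ≤ #R := by
  rw [wordImage_eq_image]
  exact card_image_le

/-- The word `w` compresses `R` if it merges two states of `R`, that is, if the image of `R` under
`w` has fewer states than `R`. -/
def Compresses (act : A → Q → Q) (w : List A) (R : Finset Q) : Prop :=
  #(wordImage act R w) < #R

theorem not_compresses_iff : ¬Compresses act w R ↔ #(wordImage act R w) = #R :=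
  not_lt.trans (card_wordImage_le act R w).ge_iff_eq

theorem compresses_iff_not_injOn :
    Compresses act w R ↔ ¬Set.InjOn (fun q ↦ w.foldl (fun q s ↦ act s q) q) R := by
  rw [← not_iff_not, not_compresses_iff, wordImage_eq_image, card_image_iff, not_not]

theorem compresses_append :
    Compresses act (w ++ v) R ↔ Compresses act w R ∨ Compresses act v (wordImage act R w) := by
  have hw := card_wordImage_le act R w
  have hv := card_wordImage_le act (wordImage act R w) v
  simp only [Compresses, wordImage_append]
  omega

theorem Compresses.mono (h : Compresses act w R) (hRS : R ⊆ S) : Compresses act w S := by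
  rw [compresses_iff_not_injOn] at h ⊢
  exact fun hS ↦ h (hS.mono hRS)

theorem Compresses.exists_pair (h : Compresses act w R) :
    ∃ P ⊆ R, #P = 2 ∧ Compresses act w P := by
  simp only [compresses_iff_not_injOn, Set.InjOn] at h ⊢
  push Not at h
  obtain ⟨p, hp, q, hq, hpq, hne⟩ := h
  exact ⟨{p, q}, by grind, card_pair hne, fun hinj ↦ hne (hinj (by simp) (by simp) hpq)⟩

theorem length_le_choose_of_minimalFor_compresses [Fintype Q]
    (hv : MinimalFor (Compresses act · R) List.length v) :
    v.length ≤ (2 + #Rᶜ).choose 2 := by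
  obtain ⟨P, hPR, hP, hvP⟩ := hv.prop.exists_pair
  have hshort {w : List A} (hw : w.length < v.length) : ¬Compresses act w R :=
    fun h ↦ hv.not_prop_of_lt hw h
  have htake (i : Fin v.length) : ¬Compresses act (v.take i) R :=
    hshort (by simp)
  have htakeP (i : Fin v.length) : ¬Compresses act (v.take i) P :=
    fun h ↦ htake i (h.mono hPR)
  have hdrop (i : Fin v.length) : Compresses act (v.drop i) (wordImage act P (v.take i)) := by
    rw [← List.take_append_drop i v, compresses_append] at hvP
    exact hvP.resolve_left (htakeP i)
  have hmeet (i j : Fin v.length) (hji : j < i) :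
      ¬wordImage act P (v.take i) ⊆ wordImage act R (v.take j) := by
    intro hsub
    have hcut : Compresses act (v.take j ++ v.drop i) R :=
      compresses_append.mpr (.inr ((hdrop i).mono hsub))
    refine hshort ?_ hcut
    rw [List.length_append, List.length_take, List.length_drop]
    omega
  simpa only [Fintype.card_fin] using card_le_choose_of_skew
    (S := fun i : Fin v.length ↦ wordImage act P (v.take i))
    (T := fun i : Fin v.length ↦ (wordImage act R (v.take i))ᶜ)
    (fun i ↦ (not_compresses_iff.mp (htakeP i)).trans hP)
    (fun i ↦ by rw [card_compl, not_compresses_iff.mp (htake i), ← card_compl])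
    (fun i ↦ disjoint_compl_right_iff.mpr (wordImage_mono act _ hPR))
    (fun i j hji ↦ disjoint_compl_right_iff.not.mpr (hmeet i j hji))

theorem Compresses.exists_length_le_choose [Fintype Q] (h : Compresses act w R) :
    ∃ v, v.length ≤ (2 + #Rᶜ).choose 2 ∧ Compresses act v R := by
  obtain ⟨v, hv⟩ := exists_minimalFor_of_wellFoundedLT (Compresses act · R) List.length ⟨w, h⟩
  exact ⟨v, length_le_choose_of_minimalFor_compresses hv, hv.prop⟩

end Words

theorem stmt_8_general {Q A : Type*} [Fintype Q] [DecidableEq Q] (act : A → Q → Q) (l k : ℕ)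
    (hu : ∃ u : List A, u.length ≤ l ∧
      (wordImage act Finset.univ u).card ≤ Fintype.card Q - k)
    (hw : ∃ w : List A, (wordImage act Finset.univ w).card ≤ Fintype.card Q - (k + 1)) :
    ∃ w : List A, w.length ≤ l + (2 + k).choose 2 ∧
      (wordImage act Finset.univ w).card ≤ Fintype.card Q - (k + 1) := by
  obtain ⟨u, hul, hu⟩ := hu
  obtain ⟨w, hw⟩ := hw
  by_cases hdone : #(wordImage act univ u) ≤ Fintype.card Q - (k + 1)
  · exact ⟨u, by omega, hdone⟩
  set R := wordImage act univ u with hR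
  have hcompl : #Rᶜ = k := by
    rw [card_compl]
    omega
  have hcompress : Compresses act w R := calc
    #(wordImage act R w) ≤ #(wordImage act univ w) :=
      card_le_card (wordImage_mono act w (subset_univ R))
    _ < #R := by omega
  obtain ⟨v, hvl, hv⟩ := hcompress.exists_length_le_choose
  rw [hcompl] at hvl
  refine ⟨u ++ v, by rw [List.length_append]; omega, ?_⟩
  have hvR : #(wordImage act R v) < #R := hv
  rw [wordImage_append, ← hR]
  omega

theorem stmt_8 {Q A : Type*} [Fintype Q] [DecidableEq Q] (act : A → Q → Q)
    (h2 : ∃ u : List A, u.length ≤ 3 ∧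
      (wordImage act Finset.univ u).card ≤ Fintype.card Q - 2)
    (h3 : ∃ w : List A, (wordImage act Finset.univ w).card ≤ Fintype.card Q - 3) :
    ∃ w : List A, w.length ≤ 9 ∧
      (wordImage act Finset.univ w).card ≤ Fintype.card Q - 3 :=
  stmt_8_general act 3 2 h2 h3
end

section
/- Let (Q, Σ) be a DFA with n = |Q| satisfying hypothesis (H). Then there exist distinct states p₁, p₂ ∈ Q such that some letter b ∈ Σ satisfies Qb = Q∖{p₁} and p₁b = p₂b, some letter a ∈ Σ satisfies Qa = Q and p₁a = p₂, and every letter s ∈ Σ satisfies one of the following two conditions: (1) Qs = Q and p₁s ∈ {p₁, p₂}; (2) Qs = Q∖{p₁} and p₁s = p₂s. -/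
/-!
By hypothesis (H) for words of length 1, every letter is a permutation or omits exactly one state.
Call a state merged by `s` if `s` sends another state to the same place. By (H) for words of length
2 and 3, each non-permutation letter merges every omitted state `p`, and every image `p a` of one
under a permutation letter `a`. If all these `p a` were themselves omitted, then every `Q w` would
already be the image of `Q` under a word of length at most 1, against (H). So some omitted `p₁` has
an image `p₂ = p₁ a` that is not omitted. A letter of rank `n - 1` merges at most two states, hence
exactly `p₁` and `p₂`; in particular, `p₁` is the only omitted state.
-/

section Merging

variable {α β : Type*} {f : α → β} {p q r : α}

/-- `f` merges the state `p` with another state: the fibre of `f` through `p` is not a singleton. -/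
def IsMerged (f : α → β) (p : α) : Prop := ∃ q, q ≠ p ∧ f q = f p

variable [Fintype α] [DecidableEq β]

theorem image_compl_eq_image_univ_iff [DecidableEq α] {S : Finset α} :
    Sᶜ.image f = Finset.univ.image f ↔ ∀ p ∈ S, ∃ q ∉ S, f q = f p := by
  constructor
  · intro h p _
    have hp : f p ∈ Sᶜ.image f := h ▸ Finset.mem_image_of_mem f (Finset.mem_univ p)
    simpa only [Finset.mem_image, Finset.mem_compl] using hp
  · intro h
    refine (Finset.image_subset_image (Finset.subset_univ _)).antisymm fun y hy ↦ ?_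
    obtain ⟨p, -, rfl⟩ := Finset.mem_image.1 hy
    by_cases hp : p ∈ S
    · obtain ⟨q, hq, hqp⟩ := h p hp
      exact Finset.mem_image.2 ⟨q, Finset.mem_compl.2 hq, hqp⟩
    · exact Finset.mem_image_of_mem f (Finset.mem_compl.2 hp)

theorem image_compl_singleton_eq_image_univ_iff [DecidableEq α] :
    ({p}ᶜ : Finset α).image f = Finset.univ.image f ↔ IsMerged f p := by
  simp [image_compl_eq_image_univ_iff, IsMerged]

theorem card_image_univ_add_card_le {S : Finset α} (h : ∀ p ∈ S, ∃ q ∉ S, f q = f p) :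
    (Finset.univ.image f).card + S.card ≤ Fintype.card α := by
  classical
  rw [← image_compl_eq_image_univ_iff.2 h, ← Finset.card_compl_add_card S]
  exact Nat.add_le_add_right Finset.card_image_le _

theorem isMerged_of_not_injective [DecidableEq α] (hf : ¬ Function.Injective f)
    (hp : Fintype.card α ≤ (({p}ᶜ : Finset α).image f).card + 1) : IsMerged f p := by
  have hlt : (Finset.univ.image f).card < Fintype.card α :=
    lt_of_le_of_ne Finset.card_image_le fun h ↦
      hf (Set.injOn_univ.1 (by simpa using Finset.card_image_iff.1 h))
  exact image_compl_singleton_eq_image_univ_iff.1 <|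
    Finset.eq_of_subset_of_card_le (Finset.image_subset_image (Finset.subset_univ _)) (by omega)

theorem IsMerged.apply_eq (hf : Fintype.card α ≤ (Finset.univ.image f).card + 1)
    (hp : IsMerged f p) (hq : IsMerged f q) : f p = f q := by
  classical
  by_contra hne
  obtain ⟨p', hp', hpp'⟩ := hp
  obtain ⟨q', hq', hqq'⟩ := hq
  have hpq : p ≠ q := ne_of_apply_ne f hne
  have hp'q : p' ≠ q := by rintro rfl; exact hne hpp'.symm
  have hq'p : q' ≠ p := by rintro rfl; exact hne hqq'
  have hle := card_image_univ_add_card_le (f := f) (S := {p, q}) <| by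
    simp only [Finset.mem_insert, Finset.mem_singleton, forall_eq_or_imp, forall_eq, not_or]
    exact ⟨⟨p', ⟨hp', hp'q⟩, hpp'⟩, q', ⟨hq'p, hq'⟩, hqq'⟩
  rw [Finset.card_pair hpq] at hle
  omega

theorem IsMerged.eq_or_eq (hf : Fintype.card α ≤ (Finset.univ.image f).card + 1) (hpq : p ≠ q)
    (hp : IsMerged f p) (hq : IsMerged f q) (hr : IsMerged f r) : r = p ∨ r = q := by
  classical
  by_contra hne
  have hle := card_image_univ_add_card_le (f := f) (S := {p, q}) <| by
    simp only [Finset.mem_insert, Finset.mem_singleton, forall_eq_or_imp, forall_eq]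
    exact ⟨⟨r, hne, hr.apply_eq hf hp⟩, r, hne, hr.apply_eq hf hq⟩
  rw [Finset.card_pair hpq] at hle
  omega

end Merging

section FiniteSets

variable {α β : Type*} [Fintype α] [DecidableEq α] [Fintype β] [DecidableEq β]

theorem image_compl_of_bijective {f : α → β} (hf : Function.Bijective f) (S : Finset α) :
    Sᶜ.image f = (S.image f)ᶜ := by
  apply Finset.coe_injective
  simpa using Set.image_compl_eq (s := (S : Set α)) hf

theorem eq_univ_or_eq_compl_singleton {R : Finset α} (hR : Fintype.card α ≤ R.card + 1) :
    R = Finset.univ ∨ ∃ p, R = {p}ᶜ := by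
  have hc : Rᶜ.card ≤ 1 := by rw [Finset.card_compl]; omega
  rcases Nat.le_one_iff_eq_zero_or_eq_one.1 hc with h | h
  · exact .inl (Finset.compl_eq_empty_iff R |>.1 (Finset.card_eq_zero.1 h))
  · obtain ⟨p, hp⟩ := Finset.card_eq_one.1 h
    exact .inr ⟨p, by rw [← hp, compl_compl]⟩

theorem not_injective_of_image_univ_eq_compl_singleton {f : α → α} {p : α}
    (hf : Finset.univ.image f = {p}ᶜ) : ¬ Function.Injective f := by
  rw [Finite.injective_iff_surjective]
  intro hsurj
  obtain ⟨x, hx⟩ := hsurj p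
  simpa [hf, hx] using Finset.mem_image_of_mem f (Finset.mem_univ x)

theorem bijective_or_image_univ_eq_compl_singleton {f : α → α}
    (hf : Fintype.card α ≤ (Finset.univ.image f).card + 1) :
    Function.Bijective f ∨ ∃ p, Finset.univ.image f = {p}ᶜ := by
  refine (eq_univ_or_eq_compl_singleton hf).imp_left fun h ↦
    Finite.surjective_iff_bijective.1 fun y ↦ ?_
  simpa using h.ge (Finset.mem_univ y)

end FiniteSets

section Automaton

variable {Q A : Type*} [DecidableEq Q] {act : A → Q → Q}

theorem wordImage_mem_of_forall_image_mem {C : Set (Finset Q)}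
    (hC : ∀ R ∈ C, ∀ s, R.image (act s) ∈ C) {R : Finset Q} (hR : R ∈ C) (w : List A) :
    wordImage act R w ∈ C := by
  induction w generalizing R with
  | nil => exact hR
  | cons s _ ih => exact ih (hC R hR s)

variable [Fintype Q] {p : Q}

/-- `p` is the only state omitted by some letter `b`, that is, `Q b = Q ∖ {p}`. -/
def IsOmitted (act : A → Q → Q) (p : Q) : Prop := ∃ b, Finset.univ.image (act b) = {p}ᶜ

theorem IsOmitted.isMerged (hp : IsOmitted act p)
    (hcard : ∀ w : List A, w.length ≤ 2 →
      Fintype.card Q ≤ (wordImage act Finset.univ w).card + 1)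
    {c : A} (hc : ¬ Function.Injective (act c)) : IsMerged (act c) p := by
  obtain ⟨b, hb⟩ := hp
  apply isMerged_of_not_injective hc
  simpa only [wordImage, hb] using hcard [b, c] le_rfl

theorem IsOmitted.isMerged_apply (hp : IsOmitted act p)
    (hcard : ∀ w : List A, w.length ≤ 3 →
      Fintype.card Q ≤ (wordImage act Finset.univ w).card + 1)
    {a c : A} (ha : Function.Bijective (act a)) (hc : ¬ Function.Injective (act c)) :
    IsMerged (act c) (act a p) := by
  obtain ⟨b, hb⟩ := hp
  apply isMerged_of_not_injective hc
  simpa only [wordImage, hb, image_compl_of_bijective ha, Finset.image_singleton]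
    using hcard [b, a, c] le_rfl

theorem exists_length_le_one_wordImage_eq
    (hcard : ∀ w : List A, w.length ≤ 2 →
      Fintype.card Q ≤ (wordImage act Finset.univ w).card + 1)
    (homit : ∀ p, IsOmitted act p → ∀ a, Function.Bijective (act a) → IsOmitted act (act a p))
    (w : List A) :
    ∃ v : List A, v.length ≤ 1 ∧ wordImage act Finset.univ v = wordImage act Finset.univ w := by
  refine wordImage_mem_of_forall_image_mem
    (C := {R | ∃ v : List A, v.length ≤ 1 ∧ wordImage act Finset.univ v = R}) ?_
    ⟨[], Nat.zero_le 1, rfl⟩ w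
  rintro _ ⟨v, hv, rfl⟩ s
  rcases eq_univ_or_eq_compl_singleton (hcard v (by omega)) with huniv | ⟨p, hp⟩
  · exact ⟨[s], le_rfl, by rw [huniv]; rfl⟩
  have hpo : IsOmitted act p := by
    match v, hv with
    | [], _ => exact absurd (hp ▸ Finset.mem_univ p : p ∈ ({p}ᶜ : Finset Q)) (by simp)
    | [b], _ => exact ⟨b, hp⟩
  rw [hp]
  rcases bijective_or_image_univ_eq_compl_singleton (hcard [s] (by simp)) with hs | ⟨q, hs⟩
  · obtain ⟨c, hc⟩ := homit p hpo s hs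
    exact ⟨[c], le_rfl, hc.trans (by rw [image_compl_of_bijective hs, Finset.image_singleton])⟩
  · have hmerged := hpo.isMerged hcard (not_injective_of_image_univ_eq_compl_singleton hs)
    exact ⟨[s], le_rfl, (image_compl_singleton_eq_image_univ_iff.2 hmerged).symm⟩

end Automaton

theorem stmt_10 {Q A : Type*} [Fintype Q] [DecidableEq Q] (act : A → Q → Q)
    (hH1 : ∃ w : List A, (wordImage act Finset.univ w).card ≤ Fintype.card Q - 2)
    (hH2 : ∀ w : List A, w.length ≤ 3 →
      Fintype.card Q - 2 < (wordImage act Finset.univ w).card) :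
    ∃ p₁ p₂ : Q, p₁ ≠ p₂ ∧
      (∃ b : A, Finset.univ.image (act b) = Finset.univ \ {p₁} ∧
        act b p₁ = act b p₂) ∧
      (∃ a : A, Finset.univ.image (act a) = Finset.univ ∧ act a p₁ = p₂) ∧
      ∀ s : A,
        (Finset.univ.image (act s) = Finset.univ ∧ act s p₁ ∈ ({p₁, p₂} : Set Q)) ∨
        (Finset.univ.image (act s) = Finset.univ \ {p₁} ∧ act s p₁ = act s p₂) := by
  have hcard (w : List A) (hw : w.length ≤ 3) :
      Fintype.card Q ≤ (wordImage act Finset.univ w).card + 1 := by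
    have := hH2 w hw
    omega
  have hcard₂ (w : List A) (hw : w.length ≤ 2) := hcard w (by omega)
  have hletter (s : A) := hcard [s] (by simp)
  obtain ⟨p, hp, a, ha, hpa⟩ : ∃ p, IsOmitted act p ∧
      ∃ a, Function.Bijective (act a) ∧ ¬ IsOmitted act (act a p) := by
    by_contra! homit
    obtain ⟨w, hw⟩ := hH1
    obtain ⟨v, hv, hvw⟩ := exists_length_le_one_wordImage_eq hcard₂ homit w
    exact (hH2 v (by omega)).not_ge (hvw ▸ hw)
  have hne : p ≠ act a p := fun h ↦ hpa (h ▸ hp)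
  have hmerge {c : A} (hc : ¬ Function.Injective (act c)) : act c p = act c (act a p) :=
    (hp.isMerged hcard₂ hc).apply_eq (hletter c) (hp.isMerged_apply hcard ha hc)
  obtain ⟨b, hb⟩ := id hp
  have hbinj := not_injective_of_image_univ_eq_compl_singleton hb
  have hpair {r : Q} : IsMerged (act b) r → r = p ∨ r = act a p :=
    (hp.isMerged hcard₂ hbinj).eq_or_eq (hletter b) hne (hp.isMerged_apply hcard ha hbinj)
  have honly {q : Q} (hq : IsOmitted act q) : q = p :=
    (hpair (hq.isMerged hcard₂ hbinj)).resolve_right fun h ↦ hpa (h ▸ hq)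
  refine ⟨p, act a p, hne, ⟨b, hb, hmerge hbinj⟩,
    ⟨a, Finset.image_univ_of_surjective ha.surjective, rfl⟩, fun s ↦ ?_⟩
  rcases bijective_or_image_univ_eq_compl_singleton (hletter s) with hs | ⟨q, hs⟩
  · exact .inl ⟨Finset.image_univ_of_surjective hs.surjective,
      hpair (hp.isMerged_apply hcard hs hbinj)⟩
  · exact .inr ⟨honly ⟨s, hs⟩ ▸ hs, hmerge (not_injective_of_image_univ_eq_compl_singleton hs)⟩
end

section
/- Let (Q, Σ) be a DFA with n = |Q|. Suppose there exist distinct states p₁, p₂ ∈ Q such that every letter s ∈ Σ satisfies one of the following two conditions: (1) Qs = Q and p₁s ∈ {p₁, p₂}; (2) Qs = Q∖{p₁} and p₁s = p₂s. Then every word w over Σ with |w| ≤ 3 satisfies |Qw| > n − 2. -/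
/-!
Once a state is missing from the image, a second one can be lost only to a merging letter that is
applied while the missing state is neither `p₁` nor `p₂`. The first letter can make only `p₁`
missing, the second can at worst move the missing state to `p₂`, and the third can at worst move it
out of `{p₁, p₂}`: losing a second state takes a fourth letter.
-/

open Function Set

section Image

variable {α β : Type*} {f : α → β} {s : Set α} {a b : α}

theorem compl_image_subset_singleton (hf : Surjective f) (hs : sᶜ ⊆ {a}) :
    (f '' s)ᶜ ⊆ {f a} :=
  calc (f '' s)ᶜ ⊆ f '' sᶜ := subset_image_compl hf
    _ ⊆ f '' {a} := image_mono hs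
    _ = {f a} := image_singleton

theorem image_eq_range_of_compl_subset_singleton (hab : a ≠ b) (h : f a = f b)
    (hs : sᶜ ⊆ {a}) : f '' s = range f := by
  have hb : b ∈ s := not_not.mp fun hb => hab (hs hb).symm
  have h_compl : f '' sᶜ ⊆ f '' s := by
    rintro _ ⟨x, hx, rfl⟩
    obtain rfl : x = a := hs hx
    exact ⟨b, hb, h.symm⟩
  rw [← image_union_image_compl_eq_range f (s := s), union_eq_left.mpr h_compl]

theorem card_sub_two_lt_card_of_compl_subsingleton [Fintype α] [Nontrivial α] {t : Finset α}
    (ht : (t : Set α)ᶜ.Subsingleton) : Fintype.card α - 2 < t.card := by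
  classical
  have h_compl : tᶜ.card ≤ 1 := by
    rwa [Finset.card_le_one_iff_subsingleton, Finset.coe_compl]
  have h_card : t.card + tᶜ.card = Fintype.card α := t.card_add_card_compl
  have h_two : 1 < Fintype.card α := Fintype.one_lt_card
  omega

end Image

section SlowLetters

variable {Q A : Type*}

/-- The two kinds of letters allowed by the theorem, as a condition on the transformation `f` of the
states. On an infinite state set the first kind need not be injective and the second kind may be
surjective. -/
def IsSlowLetter (p₁ p₂ : Q) (f : Q → Q) : Prop :=
  (Surjective f ∧ f p₁ ∈ ({p₁, p₂} : Set Q)) ∨ ((range f)ᶜ ⊆ {p₁} ∧ f p₁ = f p₂)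

namespace IsSlowLetter

variable {p₁ p₂ : Q} {f : Q → Q} {R : Set Q}

theorem of_image_univ [Fintype Q] [DecidableEq Q]
    (h : (Finset.univ.image f = Finset.univ ∧ f p₁ ∈ ({p₁, p₂} : Set Q)) ∨
      (Finset.univ.image f = Finset.univ \ {p₁} ∧ f p₁ = f p₂)) :
    IsSlowLetter p₁ p₂ f := by
  rcases h with ⟨h_image, h_mem⟩ | ⟨h_image, h_merge⟩
  · refine .inl ⟨range_eq_univ.mp ?_, h_mem⟩
    rw [← Fintype.coe_image_univ, h_image, Finset.coe_univ]
  · refine .inr ⟨?_, h_merge⟩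
    rw [← Fintype.coe_image_univ, h_image, ← Finset.compl_eq_univ_sdiff, Finset.coe_compl,
      compl_compl, Finset.coe_singleton]

theorem compl_range_subset (hf : IsSlowLetter p₁ p₂ f) : (range f)ᶜ ⊆ {p₁} := by
  rcases hf with ⟨h_surj, -⟩ | ⟨h_range, -⟩
  · simp [h_surj.range_eq]
  · exact h_range

theorem compl_image_subset_or (hf : IsSlowLetter p₁ p₂ f) (hp : p₁ ≠ p₂) (hR : Rᶜ ⊆ {p₁}) :
    (f '' R)ᶜ ⊆ {p₁} ∨ (f '' R)ᶜ ⊆ {p₂} := by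
  rcases hf with ⟨h_surj, h_fix | h_move⟩ | ⟨h_range, h_merge⟩
  · exact .inl (h_fix ▸ compl_image_subset_singleton h_surj hR)
  · exact .inr (h_move ▸ compl_image_subset_singleton h_surj hR)
  · left
    rwa [image_eq_range_of_compl_subset_singleton hp h_merge hR]

theorem compl_image_subsingleton (hf : IsSlowLetter p₁ p₂ f) (hp : p₁ ≠ p₂) (hR : Rᶜ ⊆ {p₂}) :
    (f '' R)ᶜ.Subsingleton := by
  rcases hf with ⟨h_surj, -⟩ | ⟨h_range, h_merge⟩
  · exact subsingleton_singleton.anti (compl_image_subset_singleton h_surj hR)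
  · rw [image_eq_range_of_compl_subset_singleton hp.symm h_merge.symm hR]
    exact subsingleton_singleton.anti h_range

end IsSlowLetter

/-- The transformation `q ↦ qw` of the states induced by a word `w`, whose letters act from left to
right. -/
def wordMap (act : A → Q → Q) (w : List A) (q : Q) : Q :=
  w.foldl (fun x s => act s x) q

section WordMap

variable (act : A → Q → Q)

theorem image_wordMap_nil (R : Set Q) : wordMap act [] '' R = R :=
  image_id R

theorem image_wordMap_cons (s : A) (w : List A) (R : Set Q) :
    wordMap act (s :: w) '' R = wordMap act w '' (act s '' R) :=
  image_comp (wordMap act w) (act s) R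

theorem coe_wordImage [DecidableEq Q] (R : Finset Q) (w : List A) :
    (wordImage act R w : Set Q) = wordMap act w '' R := by
  induction w generalizing R with
  | nil => rw [wordImage, image_wordMap_nil]
  | cons s w ih => rw [wordImage, ih, Finset.coe_image, image_wordMap_cons]

end WordMap

section SlowWords

variable {act : A → Q → Q} {p₁ p₂ : Q} {R : Set Q}

theorem compl_image_wordMap_subsingleton_of_length_le_one (hp : p₁ ≠ p₂)
    (hs : ∀ s, IsSlowLetter p₁ p₂ (act s)) (hR : Rᶜ ⊆ {p₂}) {w : List A} (hw : w.length ≤ 1) :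
    (wordMap act w '' R)ᶜ.Subsingleton := by
  match w with
  | [] =>
    rw [image_wordMap_nil]
    exact subsingleton_singleton.anti hR
  | [s] =>
    rw [image_wordMap_cons, image_wordMap_nil]
    exact (hs s).compl_image_subsingleton hp hR

theorem compl_image_wordMap_subsingleton_of_length_le_two (hp : p₁ ≠ p₂)
    (hs : ∀ s, IsSlowLetter p₁ p₂ (act s)) (hR : Rᶜ ⊆ {p₁}) {w : List A} (hw : w.length ≤ 2) :
    (wordMap act w '' R)ᶜ.Subsingleton := by
  induction w generalizing R with
  | nil =>
    rw [image_wordMap_nil]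
    exact subsingleton_singleton.anti hR
  | cons s w ih =>
    have hw' : w.length ≤ 1 := Nat.le_of_succ_le_succ hw
    rw [image_wordMap_cons]
    rcases (hs s).compl_image_subset_or hp hR with h₁ | h₂
    · exact ih h₁ (hw'.trans one_le_two)
    · exact compl_image_wordMap_subsingleton_of_length_le_one hp hs h₂ hw'

end SlowWords

theorem stmt_11_general (act : A → Q → Q) (p₁ p₂ : Q) (hp : p₁ ≠ p₂)
    (hs : ∀ s, IsSlowLetter p₁ p₂ (act s)) (w : List A) (hw : w.length ≤ 3) :
    (range (wordMap act w))ᶜ.Subsingleton := by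
  rw [← image_univ]
  match w with
  | [] =>
    rw [image_wordMap_nil, compl_univ]
    exact subsingleton_empty
  | s :: w =>
    rw [image_wordMap_cons, image_univ]
    exact compl_image_wordMap_subsingleton_of_length_le_two hp hs (hs s).compl_range_subset
      (Nat.le_of_succ_le_succ hw)

end SlowLetters

theorem stmt_11 {Q A : Type*} [Fintype Q] [DecidableEq Q] (act : A → Q → Q)
    (p₁ p₂ : Q) (hp : p₁ ≠ p₂)
    (hs : ∀ s : A,
      (Finset.univ.image (act s) = Finset.univ ∧ act s p₁ ∈ ({p₁, p₂} : Set Q)) ∨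
      (Finset.univ.image (act s) = Finset.univ \ {p₁} ∧ act s p₁ = act s p₂)) :
    ∀ w : List A, w.length ≤ 3 →
      Fintype.card Q - 2 < (wordImage act Finset.univ w).card := by
  intro w hw
  have : Nontrivial Q := ⟨p₁, p₂, hp⟩
  apply card_sub_two_lt_card_of_compl_subsingleton
  rw [coe_wordImage, Finset.coe_univ, image_univ]
  exact stmt_11_general act p₁ p₂ hp (fun s => .of_image_univ (hs s)) w hw
end

section
/- Let (Q, Σ) be a DFA with n = |Q| such that some word w over Σ satisfies |w| ≤ 9 and |Qw| = n − 3. Then the following two statements are equivalent: (1) every word w = w₁w₂⋯w_k over Σ with k ≤ 9 and |Qw| = n − 3 satisfies k ≥ 4 and |Q(w₁w₂w₃w₄)| > n − 2; (2) every word w = w₁w₂⋯w_k over Σ with k ≤ 9 and |Qw| = n − 3 satisfies k = 9, |Q(w₁⋯wᵢ)| = n − 1 for i = 1,2,3,4, and |Q(w₁⋯wᵢ)| = n − 2 for i = 5,6,7,8. -/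
/-!
Instead of the image of a word we follow its complement, the set of *holes*. Suppose that no word
of length at most nine reaches deficiency three after reaching deficiency two within four letters,
and let `w` be a shortest word of deficiency three: a letter `a` creates the hole `e`, a word `R` of
permutations moves it, a letter `b` creates the second hole, and a word `U` the third. Since `R` has
at least three letters, we have to show that `U` has at least four.

Assume first that every letter of `w` creates at most one hole. The skew Bollobás theorem bounds how
many pairs of holes can survive all short words, so that very few pairs are reached early. It
follows that, for `l` the image of `e` under the first letter of `R`, every letter with one hole has
the hole `e` and identifies `e` with `l`, and that the permutations send `e` to `e` or `l`. If `U`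
had at most three letters, it would be `p q c` with permutations `p` and `q`; the coincidences among
pairs reached early would then confine the images of `e` under the prefixes of `R` to four states,
so that `R` has three letters, and keep the pair of holes after `b` from growing under `U`.

Otherwise it is the last letter `d` of `w` that creates two holes, and `d` identifies at most four
states with others; by minimality of `w`, short words of permutations send `e` to one of these. If
`d` is not `b`, it follows that `R` has only three letters, and then `d` followed by `w` contradicts
the hypothesis. If `d` is `b`, counting shows that `R` has three letters as well; the second hole
after `d a` is moved along with `e`, and comparing the two leads to a contradiction.
-/

namespace DeficiencyThree

open Finset

section Holes

variable {α : Type*} [Fintype α] [DecidableEq α] {f : α → α} {D E : Finset α}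
  {k l x y z : α}

/-- The points that `f` leaves unoccupied when the points of `D` are unoccupied before `f` is
applied; `holes f ∅` is the complement of the range of `f`. -/
def holes (f : α → α) (D : Finset α) : Finset α := (Dᶜ.image f)ᶜ

lemma mem_holes : x ∈ holes f D ↔ ∀ y, f y = x → y ∈ D := by
  simp only [holes, mem_compl, mem_image, not_exists, not_and]
  exact forall_congr' fun y => ⟨fun h hy => by_contra fun hD => h hD hy, fun h hD hy => hD (h hy)⟩

@[simp]
lemma holes_id (D : Finset α) : holes id D = D := by simp [holes]

lemma holes_comp (g f : α → α) (D : Finset α) : holes (g ∘ f) D = holes g (holes f D) := by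
  simp [holes, image_image]

lemma holes_mono (f : α → α) (h : D ⊆ E) : holes f D ⊆ holes f E := fun _ hx =>
  mem_holes.2 fun y hy => h (mem_holes.1 hx y hy)

lemma card_holes_empty_add (f : α → α) : #(univ.image f) + #(holes f ∅) = Fintype.card α := by
  rw [holes, compl_empty, card_add_card_compl]

lemma card_le_card_holes (f : α → α) (D : Finset α) : #D ≤ #(holes f D) := by
  have := card_image_le (s := Dᶜ) (f := f)
  have := card_le_univ D
  grind [holes, card_compl]

lemma card_lt_card_holes_iff :
    #D < #(holes f D) ↔ ∃ x ∉ D, ∃ y ∉ D, x ≠ y ∧ f x = f y := by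
  have hD : #D < #(holes f D) ↔ #(Dᶜ.image f) ≠ #Dᶜ := by
    have := card_image_le (s := Dᶜ) (f := f)
    have := card_le_univ D
    have := card_le_univ (Dᶜ.image f)
    grind [holes, card_compl]
  rw [hD, Ne, card_image_iff]
  simp only [Set.InjOn, coe_compl, Set.mem_compl_iff, mem_coe]
  grind

lemma holes_empty_eq_empty_iff : holes f ∅ = ∅ ↔ f.Injective := by
  rw [Finite.injective_iff_surjective, eq_empty_iff_forall_notMem]
  simp [mem_holes, Function.Surjective]

lemma holes_of_injective (hf : f.Injective) (D : Finset α) : holes f D = D.image f := by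
  ext x
  obtain ⟨y, rfl⟩ := Finite.surjective_of_injective hf x
  simp [mem_holes, hf.eq_iff]

lemma holes_union_subset (f : α → α) (D E : Finset α) :
    holes f (D ∪ E) ⊆ holes f D ∪ E.image f := by
  intro x
  simp only [mem_union, mem_image, mem_holes]
  grind

lemma card_holes_union_le (f : α → α) (D E : Finset α) : #(holes f (D ∪ E)) ≤ #(holes f D) + #E :=
  calc #(holes f (D ∪ E)) ≤ #(holes f D) + #(E.image f) :=
        (card_le_card (holes_union_subset f D E)).trans (card_union_le _ _)
    _ ≤ #(holes f D) + #E := by grw [card_image_le]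

lemma card_holes_le (f : α → α) (D : Finset α) : #(holes f D) ≤ #(holes f ∅) + #D := by
  simpa using card_holes_union_le f ∅ D

/-- The points at which `f` is not one-to-one. -/
def merged (f : α → α) : Finset α := {x | ∃ y, y ≠ x ∧ f y = f x}

lemma mem_merged : x ∈ merged f ↔ ∃ y, y ≠ x ∧ f y = f x := by simp [merged]

lemma insert_subset_holes (hx : x ∈ D) (hxf : x ∉ merged f) :
    insert (f x) (holes f ∅) ⊆ holes f D := by
  intro y hy
  rw [mem_merged] at hxf
  rw [mem_insert, mem_holes] at hy
  grind [mem_holes]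

lemma card_holes_empty_lt (hx : x ∈ D) (hxf : x ∉ merged f) : #(holes f ∅) < #(holes f D) := by
  have hfx : f x ∉ holes f ∅ := fun h => by simpa using mem_holes.1 h x rfl
  calc #(holes f ∅) < #(insert (f x) (holes f ∅)) := by rw [card_insert_of_notMem hfx]; omega
    _ ≤ #(holes f D) := card_le_card (insert_subset_holes hx hxf)

lemma holes_singleton_of_mem_merged (hx : x ∈ merged f) : holes f {x} = holes f ∅ := by
  ext y
  simp only [mem_holes, mem_merged] at *
  grind

lemma card_holes_pair (hx : x ∈ merged f) (hz : z ∉ merged f) :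
    #(holes f {x, z}) = #(holes f ∅) + 1 := by
  refine le_antisymm ?_ (card_holes_empty_lt (mem_insert_of_mem (mem_singleton_self z)) hz)
  have := card_holes_union_le f {x} {z}
  rwa [← insert_eq, holes_singleton_of_mem_merged hx, card_singleton] at this

lemma two_mul_card_image_merged_le (f : α → α) : 2 * #((merged f).image f) ≤ #(merged f) := by
  refine mul_card_image_le_card (f := f) (merged f) 2 fun y hy => ?_
  obtain ⟨x, hx, rfl⟩ := mem_image.1 hy
  obtain ⟨x', hne, hx'⟩ := mem_merged.1 hx
  have hx'm : x' ∈ merged f := mem_merged.2 ⟨x, hne.symm, hx'.symm⟩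
  exact one_lt_card.2 ⟨x, by simp [hx], x', by simp [hx'm, hx'], hne.symm⟩

lemma card_merged_le (f : α → α) : #(merged f) ≤ 2 * #(holes f ∅) := by
  have himage : #(univ.image f) ≤ #((merged f).image f) + #(merged f)ᶜ := by
    rw [← union_compl (merged f), image_union]
    exact (card_union_le _ _).trans (by grind [card_image_le (s := (merged f)ᶜ) (f := f)])
  have := two_mul_card_image_merged_le f
  have := card_holes_empty_add f
  have := card_add_card_compl (merged f)
  omega

/-- A map whose only hole is `k` and which is one-to-one except that it identifies `k` with `l`. -/
structure IsFold (f : α → α) (k l : α) : Prop where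
  holes_empty : holes f ∅ = {k}
  merged_eq : merged f = {k, l}

namespace IsFold

lemma apply_ne (h : IsFold f k l) (x : α) : f x ≠ k := fun hx =>
  notMem_empty x (mem_holes.1 (h.holes_empty ▸ mem_singleton_self k) x hx)

lemma apply_eq (h : IsFold f k l) : f l = f k := by
  obtain ⟨y, hy, hfy⟩ := mem_merged.1 (h.merged_eq ▸ mem_insert_self k {l})
  have hy' : y ∈ merged f := mem_merged.2 ⟨k, hy.symm, hfy.symm⟩
  grind [h.merged_eq]

lemma eq_or_eq (h : IsFold f k l) (hxy : x ≠ y) (hf : f x = f y) : x = k ∨ x = l := by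
  have hx : x ∈ merged f := mem_merged.2 ⟨y, hxy.symm, hf.symm⟩
  simpa [h.merged_eq] using hx

lemma ne (h : IsFold f k l) : k ≠ l := by
  rintro rfl
  obtain ⟨y, hy, hfy⟩ := mem_merged.1 (h.merged_eq ▸ mem_insert_self k {k})
  grind [h.eq_or_eq hy hfy]

lemma exists_apply_eq (h : IsFold f k l) (hy : y ≠ k) : ∃ x, f x = y := by
  by_contra! hx
  have : y ∈ holes f ∅ := mem_holes.2 fun x hxy => absurd hxy (hx x)
  grind [h.holes_empty]

lemma holes_pair (h : IsFold f k l) (hx : x = k ∨ x = l) (hxz : z ≠ x) :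
    holes f {x, z} = {k, f z} := by
  ext y
  have := h.apply_eq
  have := h.ne
  have := h.apply_ne
  have := @h.eq_or_eq
  simp only [mem_holes, mem_insert, mem_singleton]
  rcases eq_or_ne y k with rfl | hy
  · grind
  · obtain ⟨w, rfl⟩ := h.exists_apply_eq hy
    grind

lemma holes_singleton (h : IsFold f k l) (hk : z ≠ k) (hl : z ≠ l) :
    holes f {z} = {k, f z} := by
  ext y
  have := h.apply_ne
  have := @h.eq_or_eq
  simp only [mem_holes, mem_insert, mem_singleton]
  rcases eq_or_ne y k with rfl | hy
  · grind
  · obtain ⟨w, rfl⟩ := h.exists_apply_eq hy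
    grind

lemma card_holes_pair (h : IsFold f k l) (hx : ¬(x = k ∨ x = l)) (hz : ¬(z = k ∨ z = l))
    (hxz : x ≠ z) : #(holes f {x, z}) = 3 := by
  have : {k, f x, f z} ⊆ holes f {x, z} := by
    intro y
    simp only [mem_holes, mem_insert, mem_singleton]
    grind [h.apply_ne, h.eq_or_eq]
  have hcard : #{k, f x, f z} = 3 := by grind [h.apply_ne, h.eq_or_eq]
  refine le_antisymm ?_ (hcard ▸ card_le_card this)
  grind [card_holes_le f {x, z}, h.holes_empty]

end IsFold

end Holes

section SkewBollobas

variable {ι κ : Type*} [Fintype ι] [Fintype κ]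

lemma card_le_card_of_triangular_mul {R : Type*} [CommRing R] [IsDomain R] [LinearOrder ι]
    (M : Matrix ι κ R) (N : Matrix κ ι R) (hdiag : ∀ i, (M * N) i i ≠ 0)
    (hlow : ∀ i j, j < i → (M * N) i j = 0) : Fintype.card ι ≤ Fintype.card κ := by
  have hdet : (M * N).det ≠ 0 := by
    rw [Matrix.det_of_isUpperTriangular (M := M * N) fun i j h => hlow i j h]
    exact prod_ne_zero_iff.2 fun i _ => hdiag i
  calc Fintype.card ι = (M * N).rank := by
        simpa using (Matrix.rank_mul_eq_right_of_det_ne_zero (M * N) (1 : Matrix ι ι R) hdet).symm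
    _ ≤ M.rank := Matrix.rank_mul_le_left M N
    _ ≤ Fintype.card κ := M.rank_le_card_width

/-- The unordered list of values of a tuple. -/
def tupleSym {r : ℕ} (f : Fin r → κ) : Sym κ r := .mk (univ.val.map f) (by simp)

lemma prod_sum_mul_eq_sum_sym [DecidableEq κ] {R : Type*} [CommSemiring R] {r : ℕ}
    (x : Fin r → κ → R) (c : κ → R) :
    ∏ t, ∑ l, x t l * c l =
      ∑ s : Sym κ r, (∑ f with tupleSym f = s, ∏ t, x t (f t)) * ((s : Multiset κ).map c).prod := by
  calc ∏ t, ∑ l, x t l * c l = ∑ f : Fin r → κ, (∏ t, x t (f t)) * ∏ t, c (f t) := by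
        simp_rw [prod_univ_sum, Fintype.piFinset_univ, prod_mul_distrib]
    _ = ∑ s : Sym κ r, ∑ f with tupleSym f = s, (∏ t, x t (f t)) * ∏ t, c (f t) :=
        (sum_fiberwise _ _ _).symm
    _ = _ := by
        refine sum_congr rfl fun s _ => ?_
        rw [sum_mul]
        refine sum_congr rfl fun f hf => ?_
        rw [← (mem_filter.1 hf).2]
        simp only [tupleSym, Sym.coe_mk, Multiset.map_map]
        rfl

lemma card_le_choose_of_triangular_prod_sum {R : Type*} [CommRing R] [IsDomain R] [LinearOrder ι]
    {r : ℕ} (x : ι → Fin r → κ → R) (c : ι → κ → R)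
    (hdiag : ∀ i t, ∑ l, x i t l * c i l ≠ 0)
    (hlow : ∀ i j, j < i → ∃ t, ∑ l, x i t l * c j l = 0) :
    Fintype.card ι ≤ (Fintype.card κ + r - 1).choose r := by
  classical
  let M : Matrix ι (Sym κ r) R := .of fun i s => ∑ f with tupleSym f = s, ∏ t, x i t (f t)
  let N : Matrix (Sym κ r) ι R := .of fun s j => ((s : Multiset κ).map (c j)).prod
  have hMN (i j : ι) : (M * N) i j = ∏ t, ∑ l, x i t l * c j l :=
    (prod_sum_mul_eq_sum_sym _ _).symm
  rw [← Sym.card_sym_eq_choose]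
  refine card_le_card_of_triangular_mul M N (fun i => ?_) fun i j hji => ?_
  · exact hMN i i ▸ prod_ne_zero_iff.2 fun t _ => hdiag i t
  · obtain ⟨t, ht⟩ := hlow i j hji
    exact hMN i j ▸ prod_eq_zero (mem_univ t) ht

lemma exists_field_injective.{u} (α : Type u) :
    ∃ (F : Type u) (_ : Field F) (φ : α → F), φ.Injective :=
  ⟨FractionRing (MvPolynomial α ℚ), inferInstance, _,
    (IsFractionRing.injective (MvPolynomial α ℚ) _).comp MvPolynomial.X_injective⟩

/-- The skew version of Bollobás's theorem on set pairs. -/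
theorem card_le_choose_of_skew [LinearOrder ι] {α : Type*} {k r : ℕ} (D : ι → Finset α)
    (K : ι → Fin r → α) (hcard : ∀ i, #(D i) = k) (hdisj : ∀ i t, K i t ∉ D i)
    (hskew : ∀ i j, j < i → ∃ t, K i t ∈ D j) : Fintype.card ι ≤ (k + r).choose r := by
  obtain ⟨F, _, φ, hφ⟩ := exists_field_injective α
  let P (j : ι) : Polynomial F := ∏ d ∈ D j, (Polynomial.X - Polynomial.C (φ d))
  have hP (j : ι) (x : α) : ∑ l : Fin (k + 1), φ x ^ (l : ℕ) * (P j).coeff l = 0 ↔ x ∈ D j := by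
    have hdeg : (P j).natDegree < k + 1 := by
      simp [P, Polynomial.natDegree_finsetProd_X_sub_C_eq_card, hcard]
    have heval : (P j).eval (φ x) = ∑ l : Fin (k + 1), φ x ^ (l : ℕ) * (P j).coeff l := by
      simp_rw [Polynomial.eval_eq_sum_range' hdeg, sum_range, mul_comm]
    rw [← heval]
    simp [P, Polynomial.eval_prod, prod_eq_zero_iff, sub_eq_zero, hφ.eq_iff]
  have := card_le_choose_of_triangular_prod_sum (fun i t (l : Fin (k + 1)) => φ (K i t) ^ (l : ℕ))
    (fun j l => (P j).coeff l) (fun i t => (hP i _).not.2 (hdisj i t))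
    fun i j hji => (hskew i j hji).imp fun t => (hP j _).2
  simpa [add_right_comm] using this

lemma exists_transversal {α : Type*} [Fintype α] {m k : ℕ} {E : Fin m → Finset α} (hE : E.Injective)
    (hcard : ∀ i, #(E i) = k) (hk : k < Fintype.card α) (hm : m ≤ 3) (i : Fin m) :
    ∃ K : Fin 2 → α, (∀ t, K t ∉ E i) ∧ ∀ j < i, ∃ t, K t ∈ E j := by
  have (t : Fin 2) : ∃ x ∉ E i, ∀ j < i, j.val = t → x ∈ E j := by
    by_cases ht : ∃ j < i, j.val = t
    · obtain ⟨j, hji, hjt⟩ := ht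
      obtain ⟨x, hxj, hxi⟩ : ∃ x ∈ E j, x ∉ E i := not_subset.1 fun h =>
        hji.ne (hE (eq_of_subset_of_card_le h (by simp [hcard])))
      exact ⟨x, hxi, fun j' _ hj't => by rwa [Fin.ext (hj't.trans hjt.symm)]⟩
    · obtain ⟨x, hx⟩ : ∃ x, x ∉ E i := by
        by_contra! h
        exact hk.ne (by rw [← hcard i, eq_univ_of_forall h, card_univ])
      exact ⟨x, hx, fun j hji hjt => absurd ⟨j, hji, hjt⟩ ht⟩
  choose K hKi hKj using this
  exact ⟨K, hKi, fun j hji => ⟨⟨j, by omega⟩, hKj _ j hji rfl⟩⟩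

end SkewBollobas

section Words

variable {Q A : Type*} {act : A → Q → Q} {v : List A} {D : Finset Q} {k n : ℕ}

/-- The transformation of the states induced by a word, read from left to right. -/
def run (act : A → Q → Q) (w : List A) (q : Q) : Q := w.foldl (fun q s => act s q) q

@[simp]
lemma run_nil (act : A → Q → Q) : run act [] = id := rfl

@[simp]
lemma run_cons (act : A → Q → Q) (s : A) (w : List A) : run act (s :: w) = run act w ∘ act s := rfl

@[simp]
lemma run_append (act : A → Q → Q) (u v : List A) : run act (u ++ v) = run act v ∘ run act u :=
  funext fun q => by simp [run]

lemma exists_shortest {P : List A → Prop} (h : ∃ v, P v) :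
    ∃ v, P v ∧ ∀ u : List A, u.length < v.length → ¬P u := by
  obtain ⟨v, hv, hmin⟩ := exists_minimalFor_of_wellFoundedLT P List.length h
  exact ⟨v, hv, fun u hu hPu => (hmin hPu hu.le).not_gt hu⟩

variable [DecidableEq Q]

lemma wordImage_eq_image_run (act : A → Q → Q) (R : Finset Q) (w : List A) :
    wordImage act R w = R.image (run act w) := by
  induction w generalizing R with
  | nil => simp [wordImage]
  | cons s w ih => rw [wordImage, ih, image_image, run_cons]

variable [Fintype Q]

lemma holes_run_append (act : A → Q → Q) (u v : List A) (D : Finset Q) :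
    holes (run act (u ++ v)) D = holes (run act v) (holes (run act u) D) := by
  rw [run_append, holes_comp]

lemma holes_run_subset_append (act : A → Q → Q) (u v : List A) :
    holes (run act v) ∅ ⊆ holes (run act (u ++ v)) ∅ := by
  rw [holes_run_append]
  exact holes_mono _ (empty_subset _)

/-- The number of states that are not in the image of the word. -/
def deficiency (act : A → Q → Q) (w : List A) : ℕ := #(holes (run act w) ∅)

lemma card_wordImage_add_deficiency (act : A → Q → Q) (w : List A) :
    #(wordImage act univ w) + deficiency act w = Fintype.card Q := by
  rw [wordImage_eq_image_run, deficiency, card_holes_empty_add]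

@[simp]
lemma deficiency_nil (act : A → Q → Q) : deficiency act [] = 0 := by simp [deficiency]

lemma deficiency_le_append_left (act : A → Q → Q) (u v : List A) :
    deficiency act u ≤ deficiency act (u ++ v) := by
  rw [deficiency, deficiency, holes_run_append]
  exact card_le_card_holes _ _

lemma deficiency_le_append_right (act : A → Q → Q) (u v : List A) :
    deficiency act v ≤ deficiency act (u ++ v) :=
  card_le_card (holes_run_subset_append act u v)

/-- No word of length at most `n` makes the set of holes grow beyond the size of `D`. -/
def Survives (act : A → Q → Q) (n : ℕ) (D : Finset Q) : Prop :=
  ∀ v : List A, v.length ≤ n → #(holes (run act v) D) ≤ #D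

lemma mem_or_mem_of_card_holes_le {f : Q → Q} (hD : #(holes f D) ≤ #D) {x y : Q} (hxy : x ≠ y)
    (hf : f x = f y) : x ∈ D ∨ y ∈ D := by
  by_contra! h
  exact hD.not_gt (card_lt_card_holes_iff.2 ⟨x, h.1, y, h.2, hxy, hf⟩)

lemma exists_pair_of_shortest (hv : #D < #(holes (run act v) D))
    (hmin : ∀ u : List A, u.length < v.length → ¬#D < #(holes (run act u) D)) {t : ℕ}
    (ht : t < v.length) : #(holes (run act (v.take t)) D) = #D ∧
      ∃ x ∉ holes (run act (v.take t)) D, ∃ y ∉ holes (run act (v.take t)) D,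
        x ≠ y ∧ run act (v.drop t) x = run act (v.drop t) y := by
  have hcard : #(holes (run act (v.take t)) D) = #D :=
    le_antisymm (not_lt.1 (hmin _ (by grind))) (card_le_card_holes _ _)
  refine ⟨hcard, card_lt_card_holes_iff.1 ?_⟩
  rwa [← holes_run_append, List.take_append_drop, hcard]

theorem add_le_choose_of_survives {m : ℕ} {E : Fin m → Finset Q} (hE : E.Injective) (hm : m ≤ 3)
    (hcard : ∀ i, #(E i) = k) (hsurv : ∀ i, Survives act n (E i)) {i : Fin m}
    (hraise : ∃ v, #(E i) < #(holes (run act v) (E i))) : m + n ≤ (k + 2).choose 2 := by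
  obtain ⟨v, hv, hmin⟩ := exists_shortest hraise
  have hn : n < v.length := by
    by_contra! h
    exact (hsurv i v h).not_gt hv
  choose K hKE hKlt using exists_transversal hE hcard
    (hcard i ▸ hv.trans_le (card_le_univ _)) hm
  have hcut (t : Fin n) := exists_pair_of_shortest hv hmin (t := v.length - n + t) (by omega)
  choose hD x hx y hy hxy hrun using hcut
  have := card_le_choose_of_skew (ι := Fin m ⊕ₗ Fin n) (k := k) (r := 2)
    (fun j => (ofLex j).elim E fun t : Fin n => holes (run act (v.take (v.length - n + t))) (E i))
    (fun j => (ofLex j).elim K fun t : Fin n => ![x t, y t])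
    (by rintro (j | t); exacts [hcard j, (hD t).trans (hcard i)])
    (by rintro (j | t); exacts [hKE j, Fin.forall_fin_two.2 ⟨hx t, hy t⟩])
    (by
      rintro (j | t) (j' | t') hlt
      · exact hKlt j j' (Sum.Lex.inl_lt_inl_iff.1 hlt)
      · exact absurd hlt Sum.Lex.not_inr_lt_inl
      · exact Fin.exists_fin_two.2 <|
          mem_or_mem_of_card_holes_le (hsurv j' _ (by grind)) (hxy t) (hrun t)
      · have htt' : t' < t := Sum.Lex.inr_lt_inr_iff.1 hlt
        refine Fin.exists_fin_two.2 (mem_or_mem_of_card_holes_le ?_ (hxy t) (hrun t))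
        change #(holes _ (holes _ (E i))) ≤ #(holes _ (E i))
        rw [hD t', ← holes_run_append]
        exact not_lt.1 (hmin _ (by grind)))
  simpa using this

/-- The letters that create at most one hole. -/
abbrev TameLetter (act : A → Q → Q) : Type _ := {s : A // #(holes (act s) ∅) ≤ 1}

/-- The automaton restricted to the letters that create at most one hole. -/
def tame (act : A → Q → Q) : TameLetter act → Q → Q := fun s => act s.1

lemma run_tame (act : A → Q → Q) (v : List (TameLetter act)) :
    run (tame act) v = run act v.unattach := by
  induction v with
  | nil => rfl
  | cons s v ih => simp [ih, tame]

lemma exists_card_holes_eq_succ {v : List (TameLetter act)}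
    (hv : #D < #(holes (run (tame act) v) D)) :
    ∃ u : List (TameLetter act), u.length ≤ v.length ∧
      #(holes (run (tame act) u) D) = #D + 1 := by
  obtain ⟨u, hu, hmin⟩ := exists_shortest (P := fun u => #D < #(holes (run (tame act) u) D)) ⟨v, hv⟩
  refine ⟨u, not_lt.1 fun h => hmin v h hv, ?_⟩
  rcases u.eq_nil_or_concat' with rfl | ⟨u, s, rfl⟩
  · simp at hu
  · have hu' := hmin u (by simp)
    have := card_holes_le (act s.1) (holes (run (tame act) u) D)
    have := s.2
    simp only [run_append, run_cons, run_nil, Function.id_comp, holes_comp, tame] at hu ⊢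
    grind [tame]

/-- No word of length at most nine reaches deficiency three after having reached deficiency
two within its first four letters. -/
def NoEarlyDrop (act : A → Q → Q) : Prop :=
  ∀ u v : List A, u.length ≤ 4 → 2 ≤ deficiency act u → u.length + v.length ≤ 9 →
    deficiency act (u ++ v) ≠ 3

/-- `D` is the set of holes of a word of length at most `t` that reaches deficiency two within its
first four letters. -/
def EarlyReach (act : A → Q → Q) (t : ℕ) (D : Finset Q) : Prop :=
  ∃ u v : List A, u.length ≤ 4 ∧ 2 ≤ deficiency act u ∧ u.length + v.length ≤ t ∧
    holes (run act (u ++ v)) ∅ = D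

lemma EarlyReach.of_word (hu : v.length ≤ 4) (hdef : 2 ≤ deficiency act v) :
    EarlyReach act v.length (holes (run act v) ∅) :=
  ⟨v, [], hu, hdef, by simp, by simp⟩

lemma EarlyReach.append {t : ℕ} (h : EarlyReach act t D) (v : List A) :
    EarlyReach act (t + v.length) (holes (run act v) D) := by
  obtain ⟨u, w, hu, hdef, hlen, rfl⟩ := h
  exact ⟨u, w ++ v, hu, hdef, by grind, by rw [← holes_run_append, List.append_assoc]⟩

lemma EarlyReach.step {t : ℕ} (h : EarlyReach act t D) (s : A) :
    EarlyReach act (t + 1) (holes (act s) D) := h.append [s]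

lemma EarlyReach.mono {t t' : ℕ} (h : EarlyReach act t D) (htt' : t ≤ t') :
    EarlyReach act t' D := by
  obtain ⟨u, w, hu, hdef, hlen, hD⟩ := h
  exact ⟨u, w, hu, hdef, hlen.trans htt', hD⟩

lemma EarlyReach.card_ne_three {t : ℕ} (H : NoEarlyDrop act) (h : EarlyReach act t D) (ht : t ≤ 9) :
    #D ≠ 3 := by
  obtain ⟨u, w, hu, hdef, hlen, rfl⟩ := h
  exact H u w hu hdef (hlen.trans ht)

lemma EarlyReach.survives {t : ℕ} (H : NoEarlyDrop act) (h : EarlyReach act t D) (hD : #D = 2)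
    (ht : t + n ≤ 9) : Survives (tame act) n D := by
  intro v hv
  by_contra! hraise
  obtain ⟨u, hu, hcard⟩ := exists_card_holes_eq_succ hraise
  rw [run_tame] at hcard
  exact (h.append _).card_ne_three H (by grind [List.length_unattach]) (hD ▸ hcard)

lemma not_injective_of_earlyReach {m : ℕ} (H : NoEarlyDrop act) {E : Fin m → Finset Q}
    (hcard : ∀ i, #(E i) = 2) (hE : ∀ i, EarlyReach act (m + 2) (E i)) (hm : m ≤ 3) {i : Fin m}
    (hraise : ∃ v, 2 < #(holes (run (tame act) v) (E i))) : ¬E.Injective := by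
  intro hinj
  have := add_le_choose_of_survives hinj hm hcard
    (fun i => (hE i).survives H (hcard i) (n := 7 - m) (by omega)) (hcard i ▸ hraise)
  have : (2 + 2).choose 2 = 6 := rfl
  omega

lemma eq_of_earlyReach_four {X Y : Finset Q} (H : NoEarlyDrop act)
    (hraise : ∃ v, 2 < deficiency (tame act) v) (hX : #X = 2) (hY : #Y = 2)
    (hrX : EarlyReach act 4 X) (hrY : EarlyReach act 4 Y) : X = Y := by
  by_contra hXY
  obtain ⟨v, hv⟩ := hraise
  refine not_injective_of_earlyReach H (E := ![X, Y]) (i := 0) ?_ ?_ (by simp)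
    ⟨v, hv.trans_le (card_le_card (holes_mono _ (empty_subset _)))⟩ ?_
  · simp [Fin.forall_fin_two, *]
  · simp [Fin.forall_fin_two, *]
  · simp [Function.Injective, Fin.forall_fin_two, hXY, Ne.symm hXY]

lemma eq_or_eq_of_earlyReach_five {X Y Z : Finset Q} (H : NoEarlyDrop act)
    (hraise : ∃ v, 2 < deficiency (tame act) v) (hX : #X = 2) (hY : #Y = 2) (hZ : #Z = 2)
    (hrX : EarlyReach act 5 X) (hrY : EarlyReach act 5 Y) (hrZ : EarlyReach act 5 Z) :
    X = Y ∨ X = Z ∨ Y = Z := by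
  by_contra! hne
  obtain ⟨hXY, hXZ, hYZ⟩ := hne
  obtain ⟨v, hv⟩ := hraise
  refine not_injective_of_earlyReach H (E := ![X, Y, Z]) (i := 0) ?_ ?_ (by simp)
    ⟨v, hv.trans_le (card_le_card (holes_mono _ (empty_subset _)))⟩ ?_
  · simp [Fin.forall_fin_succ, *]
  · simp [Fin.forall_fin_succ, *]
  · simp [Function.Injective, Fin.forall_fin_succ, *, hXY.symm, hXZ.symm, hYZ.symm]

end Words

section Config

variable {Q A : Type*} [DecidableEq Q]

lemma pair_eq_pair_iff {a b c d : Q} :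
    ({a, b} : Finset Q) = {c, d} ↔ a = c ∧ b = d ∨ a = d ∧ b = c := by
  simp [← coe_inj, Set.pair_eq_pair_iff]

variable [Fintype Q] {act : A → Q → Q} {k l m x y z : Q} {t : ℕ} {b p q r s : A}

/-- The shape that the letters with at most one hole have around the states `k` and `l`: the
bijective ones keep `k` inside `{k, l}`, the others identify `k` with `l` and miss `k`. -/
structure Rigid (act : A → Q → Q) (k l : Q) : Prop where
  apply_eq_or_eq : ∀ s, (act s).Injective → act s k = k ∨ act s k = l
  isFold : ∀ s, #(holes (act s) ∅) = 1 → IsFold (act s) k l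

/-- The situation after the letter `b` of a word `a p₂ p₃ p₄ ⋯ b p q c` of deficiency three in which
every letter creates at most one hole. For `{k, z}` to grow under `p q c`, the letters `p` and `q`
have to move `z` outside `{k, l}`; they move `k` to `m`. -/
structure Config (act : A → Q → Q) (k l m : Q) (b p q : A) : Prop where
  noEarlyDrop : NoEarlyDrop act
  raise : ∃ v, 2 < deficiency (tame act) v
  rigid : Rigid act k l
  isFold : IsFold (act b) k l
  injective_p : (act p).Injective
  injective_q : (act q).Injective
  apply_p : act p k = l
  apply_q : act q l = m
  ne_k : m ≠ k
  ne_l : m ≠ l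
  reach : EarlyReach act 4 {k, act b m}

lemma EarlyReach.perm (h : EarlyReach act t {x, z}) (hr : (act r).Injective) :
    EarlyReach act (t + 1) {act r x, act r z} := by
  simpa [holes_of_injective hr, image_insert] using h.step r

lemma EarlyReach.fold (h : EarlyReach act t {x, z}) (hb : IsFold (act b) k l) (hx : x = k ∨ x = l)
    (hzx : z ≠ x) : EarlyReach act (t + 1) {k, act b z} :=
  hb.holes_pair hx hzx ▸ h.step b

lemma EarlyReach.mem_or_mem (h : EarlyReach act t {x, z}) (H : NoEarlyDrop act)
    (hb : IsFold (act b) k l) (hxz : x ≠ z) (ht : t ≤ 8) :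
    (x = k ∨ x = l) ∨ (z = k ∨ z = l) := by
  by_contra! hne
  exact (h.step b).card_ne_three H (by omega) (hb.card_holes_pair (by grind) (by grind) hxz)

namespace Config

lemma target (C : Config act k l m b p q) (h : EarlyReach act t {k, x}) (ht : t ≤ 6) (hx : x ≠ k) :
    act q (act p x) = k ∨ act q (act p x) = l := by
  have hpq := (h.perm C.injective_p).perm C.injective_q
  have hne : act q (act p k) ≠ act q (act p x) := fun he =>
    hx (C.injective_p (C.injective_q he)).symm
  have := hpq.mem_or_mem C.noEarlyDrop C.isFold hne (by omega)
  grind [C.apply_p, C.apply_q, C.ne_k, C.ne_l]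

lemma not_three (C : Config act k l m b p q) (hxy : x ≠ y) (hxz : x ≠ z) (hyz : y ≠ z)
    (hx : act q (act p x) = k ∨ act q (act p x) = l)
    (hy : act q (act p y) = k ∨ act q (act p y) = l)
    (hz : act q (act p z) = k ∨ act q (act p z) = l) : False := by
  have := (C.injective_q.comp C.injective_p)
  grind [Function.Injective]

lemma apply_b_apply_b_eq (C : Config act k l m b p q) (hm : act b m ≠ m) (hl : act b m ≠ l) :
    act b (act b m) = l ∧ act p (act b m) = k := by
  have hz := C.isFold.apply_ne m
  have hpz : act p (act b m) ≠ l := fun h => hz (C.injective_p (h.trans C.apply_p.symm))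
  have hpE : EarlyReach act 5 {l, act p (act b m)} := C.apply_p ▸ C.reach.perm C.injective_p
  have hbE := C.reach.fold C.isFold (.inl rfl) hz
  have := eq_or_eq_of_earlyReach_five C.noEarlyDrop C.raise (card_pair hz.symm)
    (card_pair hpz.symm) (card_pair (C.isFold.apply_ne _).symm) (C.reach.mono (by omega)) hpE hbE
  simp only [pair_eq_pair_iff] at this
  have := C.isFold.ne
  have := C.isFold.eq_or_eq (x := m) (y := act b m)
  grind [C.ne_k, C.ne_l]

lemma apply_b_apply_l_eq (C : Config act k l m b p q) (hm : act b m = l) :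
    act b l = m ∧ act q k = k := by
  have hE : EarlyReach act 4 {k, l} := hm ▸ C.reach
  have hlk := C.isFold.ne
  have hqk : act q k ≠ m := fun h => hlk (C.injective_q (h.trans C.apply_q.symm))
  have hqE : EarlyReach act 5 {act q k, m} := C.apply_q ▸ hE.perm C.injective_q
  have hbE := hE.fold C.isFold (.inl rfl) hlk.symm
  have := eq_or_eq_of_earlyReach_five C.noEarlyDrop C.raise (card_pair hlk) (card_pair hqk)
    (card_pair (C.isFold.apply_ne l).symm) (hE.mono (by omega)) hqE hbE
  simp only [pair_eq_pair_iff] at this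
  have := C.isFold.eq_or_eq (x := m) (y := l)
  grind [C.ne_k, C.ne_l]

/-- `{k, act b m}` and its images under `p` (or `q`) and `b` are all reached within five letters, so
two of them coincide. -/
theorem apply_b_eq_or (C : Config act k l m b p q) :
    act b m = m ∨ act b m = l ∧ act b l = m ∧ act q k = k := by
  by_cases hl : act b m = l
  · exact .inr ⟨hl, C.apply_b_apply_l_eq hl⟩
  by_contra! hm
  obtain ⟨hbz, hpz⟩ := C.apply_b_apply_b_eq hm.1 hl
  have hlk : EarlyReach act 5 {l, k} := by
    simpa [C.apply_p, hpz] using C.reach.perm C.injective_p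
  have hbl := hlk.fold C.isFold (.inr rfl) C.isFold.ne
  refine C.not_three (x := act b m) (y := l) (z := act b k) hl (fun h => ?_) (fun h => ?_)
    (C.target C.reach (by omega) (C.isFold.apply_ne m))
    (C.target (pair_comm l k ▸ hlk) (by omega) C.isFold.ne.symm)
    (C.target hbl le_rfl (C.isFold.apply_ne k))
  · grind [C.isFold.eq_or_eq (x := m) (y := k), C.ne_k, C.ne_l]
  · have := C.isFold.eq_or_eq (x := act b m) (y := k)
    grind [C.isFold.apply_ne]

lemma apply_q_eq_or_eq (C : Config act k l m b p q) (h : EarlyReach act t {l, x}) (hx : x ≠ l)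
    (ht : t ≤ 7) : act q x = k ∨ act q x = l := by
  have hqx : m ≠ act q x := fun h => hx (C.injective_q (C.apply_q.trans h)).symm
  have := (C.apply_q ▸ h.perm C.injective_q).mem_or_mem C.noEarlyDrop C.isFold hqx (by omega)
  grind [C.ne_k, C.ne_l]

theorem apply_b_eq (C : Config act k l m b p q) (hr : (act r).Injective) (hk : act r m ≠ k)
    (hl : act r m ≠ l) (hm : act r m ≠ m) : act b m = m := by
  refine C.apply_b_eq_or.resolve_right fun ⟨hbm, hbl, hqk⟩ => ?_
  have hE : EarlyReach act 4 {k, l} := hbm ▸ C.reach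
  have hbE : EarlyReach act 5 {k, m} := hbl ▸ hE.fold C.isFold (.inl rfl) C.isFold.ne.symm
  have hqpl := C.target hE (by omega) C.isFold.ne.symm
  have hqpm := C.target hbE (by omega) C.ne_k
  have hrE := hbE.perm hr
  rcases C.rigid.apply_eq_or_eq r hr with hrk | hrk
  · rw [hrk] at hrE
    exact C.not_three C.ne_l.symm hl.symm hm.symm hqpl hqpm (C.target hrE le_rfl hk)
  · have hqn := C.apply_q_eq_or_eq (hrk ▸ hrE) hl (by omega)
    have hqE : EarlyReach act 6 {k, act q m} := hqk ▸ hbE.perm C.injective_q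
    have hqm : act q m = l := by
      by_contra hne
      have := C.target hqE le_rfl fun h => C.ne_k (C.injective_q (h.trans hqk.symm))
      refine C.not_three (x := l) (y := m) (z := act q m) ?_ ?_ ?_ hqpl hqpm this
      all_goals grind [C.ne_l, C.injective_q.eq_iff, C.apply_q]
    grind [C.injective_q.eq_iff, C.ne_k]

theorem target_apply_b (C : Config act k l m b p q) (hr : (act r).Injective) (hk : act r m ≠ k)
    (hl : act r m ≠ l) (hm : act r m ≠ m) :
    act q (act p (act b (act r m))) = k ∨ act q (act p (act b (act r m))) = l := by
  have hE : EarlyReach act 4 {k, m} := C.apply_b_eq hr hk hl hm ▸ C.reach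
  have hrE := (hE.perm hr).fold C.isFold (C.rigid.apply_eq_or_eq r hr) fun h => C.ne_k (hr h)
  exact C.target hrE le_rfl (C.isFold.apply_ne _)

lemma image_pair_eq (C : Config act k l m b p q) (hbm : act b m = m) (hr : (act r).Injective)
    (hkm : act r k ≠ k ∨ act r m ≠ m) (hm : act r m ≠ k) :
    act r k = l ∧ act r m = act p m ∨ act r k = act p m ∧ act r m = l := by
  have hE : EarlyReach act 4 {k, m} := hbm ▸ C.reach
  have hpE : EarlyReach act 5 {l, act p m} := C.apply_p ▸ hE.perm C.injective_p
  have := eq_or_eq_of_earlyReach_five C.noEarlyDrop C.raise (card_pair C.ne_k.symm)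
    (card_pair fun h => C.ne_k (C.injective_p (C.apply_p.trans h)).symm)
    (card_pair fun h => C.ne_k (hr h).symm) (hE.mono (by omega)) hpE (hE.perm hr)
  simp only [pair_eq_pair_iff] at this
  grind [C.isFold.ne, C.ne_l]

theorem apply_apply_mem (C : Config act k l m b p q) (hr : (act r).Injective) (hk : act r m ≠ k)
    (hl : act r m ≠ l) (hm : act r m ≠ m) (hs : (act s).Injective) :
    act s (act r m) ∈ ({k, l, m, act r m} : Finset Q) := by
  by_contra! hsn
  have hbm := C.apply_b_eq hr hk hl hm
  have hE : EarlyReach act 4 {k, m} := hbm ▸ C.reach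
  have hpE := C.apply_p ▸ hE.perm C.injective_p
  have hpm : act p m = act r m := by grind [C.image_pair_eq hbm hr (.inr hm) hk]
  have hqn := hpm ▸ C.target hE (by omega) C.ne_k
  have hqk := C.rigid.apply_eq_or_eq q C.injective_q
  have hq_three (x : Q) (hxk : x ≠ k) (hxn : x ≠ act r m) (hx : act q x = k ∨ act q x = l) :
      False := by
    grind [C.injective_q.eq_iff]
  rw [hpm] at hpE
  have hspE := hpE.perm hs
  have hsl : act s l = k ∨ act s l = l := by
    have := hspE.mem_or_mem C.noEarlyDrop C.isFold (fun h => hl (hs h).symm) (by omega)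
    grind
  rcases hsl with hsl | hsl
  · have hsk : act s k = l := (C.rigid.apply_eq_or_eq s hs).resolve_left fun h =>
      C.isFold.ne (hs (h.trans hsl.symm))
    have hsm : act s m = act r m := by
      grind [C.image_pair_eq hbm hs, hs.eq_iff, C.isFold.ne, C.ne_k, C.ne_l]
    rw [hsl] at hspE
    have := hsk ▸ hspE.perm hs
    have := C.apply_q_eq_or_eq this (by grind [hs.eq_iff]) le_rfl
    refine hq_three _ ?_ ?_ this <;> grind [hs.eq_iff]
  · refine hq_three _ ?_ ?_ (C.apply_q_eq_or_eq (hsl ▸ hspE) ?_ (by omega)) <;> grind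

end Config
end Config

section Shortest

variable {Q A : Type*} {act : A → Q → Q} {a b d s : A}
  {q R U u v w x y : List A} {e : Q}

lemma injective_run (hv : ∀ s ∈ v, (act s).Injective) : (run act v).Injective := by
  induction v with
  | nil => exact Function.injective_id
  | cons s v ih =>
    rw [List.forall_mem_cons] at hv
    exact (ih hv.2).comp hv.1

variable [DecidableEq Q] [Fintype Q]

/-- `w` has deficiency three, and no shorter word has. -/
structure IsShortest (act : A → Q → Q) (w : List A) : Prop where
  deficiency_eq : deficiency act w = 3
  length_le : ∀ u, deficiency act u = 3 → w.length ≤ u.length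

namespace IsShortest

lemma deficiency_le_two (h : IsShortest act (u ++ v)) (hv : v ≠ []) : deficiency act u ≤ 2 := by
  have := h.deficiency_eq ▸ deficiency_le_append_left act u v
  have := h.length_le u
  have := List.length_pos_iff.2 hv
  grind

lemma length_le_of_holes_eq (h : IsShortest act (u ++ v))
    (he : holes (run act w) ∅ = holes (run act u) ∅) : u.length ≤ w.length := by
  have := h.length_le (w ++ v) <| by
    rw [deficiency, holes_run_append, he, ← holes_run_append]
    exact h.deficiency_eq
  simpa using this

lemma deficiency_lt (h : IsShortest act (u ++ v ++ w)) (hu : u ≠ []) :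
    deficiency act v < deficiency act (u ++ v) := by
  refine (deficiency_le_append_right act u v).lt_of_ne fun he => hu ?_
  have := h.length_le_of_holes_eq (eq_of_subset_of_card_le ?_ he.ge)
  · simpa using this
  · exact holes_run_subset_append act u v

lemma mem_merged (h : IsShortest act w) (hd : #(holes (act d) ∅) = 2)
    (he : holes (run act v) ∅ = {e}) (hv : v.length + 1 < w.length) : e ∈ merged (act d) := by
  by_contra hem
  have hdef : deficiency act (v ++ [d]) = #(holes (act d) {e}) := by
    simp [deficiency, holes_comp, he]
  have := card_holes_empty_lt (mem_singleton_self e) hem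
  have := card_holes_le (act d) {e}
  have := h.length_le (v ++ [d])
  grind

end IsShortest

/-- A shortest word `a :: (R ++ b :: U)` of deficiency three, cut at the letters `a` and `b` at
which the deficiency reaches one and two; `e` is the hole that `a` creates. -/
structure Factorization (act : A → Q → Q) (a : A) (e : Q) (R : List A) (b : A) (U : List A) :
    Prop where
  noEarlyDrop : NoEarlyDrop act
  length_le : (a :: (R ++ b :: U)).length ≤ 9
  isShortest : IsShortest act (a :: (R ++ b :: U))
  holes_eq : holes (act a) ∅ = {e}
  injective : ∀ r ∈ R, (act r).Injective
  two_le : 2 ≤ deficiency act (a :: (R ++ [b]))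

lemma exists_first_drop (h : 2 ≤ deficiency act w) :
    ∃ u b v, w = u ++ b :: v ∧ deficiency act u ≤ 1 ∧ 2 ≤ deficiency act (u ++ [b]) := by
  obtain ⟨v, ⟨⟨u, rfl⟩, hv⟩, hmin⟩ :=
    exists_shortest (P := fun v => v <+: w ∧ 2 ≤ deficiency act v) ⟨w, List.prefix_rfl, h⟩
  rcases v.eq_nil_or_concat' with rfl | ⟨v, b, rfl⟩
  · simp at hv
  · have := hmin v (by simp)
    grind [List.prefix_append]

theorem exists_factorization (H : NoEarlyDrop act) (hw : IsShortest act w) (hlen : w.length ≤ 9) :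
    ∃ a e R b U, w = a :: (R ++ b :: U) ∧ Factorization act a e R b U := by
  obtain ⟨v, b, U, rfl, hv, hvb⟩ := exists_first_drop (hw.deficiency_eq.ge.trans' (by simp))
  have hne : v ≠ [] := by
    rintro rfl
    exact H [b] U (by simp) hvb (by grind) hw.deficiency_eq
  obtain ⟨a, R, rfl⟩ := List.exists_cons_of_ne_nil hne
  have hle : deficiency act [a] ≤ 1 := (deficiency_le_append_left act [a] R).trans hv
  have hpos : deficiency act [] < deficiency act ([a] ++ []) :=
    IsShortest.deficiency_lt (w := R ++ b :: U) (by simpa using hw) (by simp)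
  obtain ⟨e, he⟩ := card_eq_one.1 (show #(holes (act a) ∅) = 1 from
    le_antisymm hle (by simpa [deficiency] using hpos))
  refine ⟨a, e, R, b, U, rfl, H, hlen, hw, he, fun r hr => ?_, hvb⟩
  obtain ⟨x, y, rfl⟩ := List.append_of_mem hr
  have hlt : deficiency act [r] < deficiency act (a :: x ++ [r]) :=
    IsShortest.deficiency_lt (w := y ++ b :: U) (by simpa using hw) (by simp)
  have hle := deficiency_le_append_left act (a :: x ++ [r]) y
  rw [← holes_empty_eq_empty_iff, ← card_eq_zero]
  exact Nat.lt_one_iff.1 (hlt.trans_le (hle.trans (by simpa using hv)))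

namespace Factorization

lemma three_le_length (F : Factorization act a e R b U) : 3 ≤ R.length := by
  by_contra! h
  refine F.noEarlyDrop (a :: (R ++ [b])) U (by grind) F.two_le (by grind [F.length_le]) ?_
  simpa using F.isShortest.deficiency_eq

lemma holes_run_cons (F : Factorization act a e R b U) (hq : ∀ s ∈ q, (act s).Injective) :
    holes (run act (a :: q)) ∅ = {run act q e} := by
  rw [run_cons, holes_comp, F.holes_eq, holes_of_injective (injective_run hq), image_singleton]

lemma run_take_ne (F : Factorization act a e R b U) (i j : ℕ) (hij : i < j)
    (hj : j ≤ R.length) :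
    run act (R.take i) e ≠ run act (R.take j) e := by
  intro he
  have hinj (i : ℕ) : ∀ r ∈ R.take i, (act r).Injective := fun r hr =>
    F.injective r (List.mem_of_mem_take hr)
  have := IsShortest.length_le_of_holes_eq (act := act) (u := a :: R.take j)
    (v := R.drop j ++ b :: U) (w := a :: R.take i)
    (by simpa [← List.append_assoc (R.take j)] using F.isShortest)
    (by rw [F.holes_run_cons (hinj i), F.holes_run_cons (hinj j), he])
  grind

lemma le_card_of_run_take_mem (F : Factorization act a e R b U) {n : ℕ} (hn : n ≤ R.length + 1)
    {S : Finset Q} (hS : ∀ i < n, run act (R.take i) e ∈ S) : n ≤ #S := by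
  rw [← card_range n]
  refine card_le_card_of_injOn (fun i => run act (R.take i) e) (by simpa [Set.MapsTo] using hS) ?_
  intro i hi j hj hij
  by_contra hne
  rcases Ne.lt_or_gt hne with h | h
  · exact F.run_take_ne _ _ h (by grind) hij
  · exact F.run_take_ne _ _ h (by grind) hij.symm

lemma card_holes_le_one (F : Factorization act a e R b U)
    (hs : a :: (R ++ b :: U) = x ++ s :: y) (hy : y ≠ []) : #(holes (act s) ∅) ≤ 1 := by
  have hw := F.isShortest
  have hlen := F.length_le
  rw [hs] at hw hlen
  have hle : deficiency act (x ++ [s]) ≤ 2 :=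
    IsShortest.deficiency_le_two (v := y) (by simpa using hw) hy
  rcases eq_or_ne x [] with rfl | hx
  · by_contra! hlt
    exact F.noEarlyDrop [s] y (by simp) hlt (by grind) hw.deficiency_eq
  · have : deficiency act [s] < deficiency act (x ++ [s]) :=
      IsShortest.deficiency_lt (w := y) (by simpa using hw) hx
    exact Nat.lt_succ_iff.1 (this.trans_le hle)

lemma card_holes_last_le_two (F : Factorization act a e R b U)
    (hs : a :: (R ++ b :: U) = x ++ [s]) : #(holes (act s) ∅) ≤ 2 := by
  have hw := F.isShortest
  have hx : x ≠ [] := by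
    rintro rfl
    simp at hs
  rw [hs] at hw
  have : deficiency act [s] < deficiency act (x ++ [s]) :=
    IsShortest.deficiency_lt (w := []) (by simpa using hw) hx
  rw [hw.deficiency_eq] at this
  exact Nat.lt_succ_iff.1 this

end Factorization
end Shortest

section Tame

variable {Q A : Type*} [DecidableEq Q] [Fintype Q] {act : A → Q → Q} {k l x y z : Q}
  {a b c p q s : A} {e : Q} {R U v w : List A}

lemma IsShortest.exists_two_lt_deficiency_tame (hw : IsShortest act w)
    (hs : ∀ s ∈ w, #(holes (act s) ∅) ≤ 1) : ∃ v, 2 < deficiency (tame act) v := by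
  refine ⟨w.attachWith _ hs, ?_⟩
  rw [deficiency, run_tame, List.unattach_attachWith]
  exact hw.deficiency_eq.ge

lemma deficiency_ne_two (H : NoEarlyDrop act) (hraise : ∃ v, 2 < deficiency (tame act) v)
    (hv : v.length ≤ 3) : deficiency act v ≠ 2 := by
  intro hdef
  obtain ⟨w, hw⟩ := hraise
  have hE : EarlyReach act 3 (holes (run act v) ∅) :=
    (EarlyReach.of_word (by omega) hdef.ge).mono hv
  exact not_injective_of_earlyReach H (E := ![holes (run act v) ∅]) (i := 0)
    (by simpa [deficiency] using hdef) (by simpa using hE) (by simp)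
    ⟨w, hw.trans_le (card_le_card (holes_mono _ (empty_subset _)))⟩
    (Function.injective_of_subsingleton _)

lemma mem_merged_of_holes_run_eq (H : NoEarlyDrop act)
    (hraise : ∃ v, 2 < deficiency (tame act) v) (hv : v.length ≤ 2)
    (hx : holes (run act v) ∅ = {x}) (hc : #(holes (act c) ∅) = 1) : x ∈ merged (act c) := by
  by_contra hxc
  have hdef : deficiency act (v ++ [c]) = #(holes (act c) {x}) := by
    simp [deficiency, holes_comp, hx]
  have hlt := card_holes_empty_lt (mem_singleton_self x) hxc
  have hle := card_holes_le (act c) {x}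
  have hne := deficiency_ne_two H hraise (v := v ++ [c]) (by simp; omega)
  grind

theorem rigid_of_noEarlyDrop (H : NoEarlyDrop act) (hraise : ∃ v, 2 < deficiency (tame act) v)
    (ha : holes (act a) ∅ = {e}) (hp : (act p).Injective) (hq : (act q).Injective)
    (hpe : act p e ≠ e) (hqe : act q (act p e) ≠ e) (hqp : act q (act p e) ≠ act p e) :
    Rigid act e (act p e) := by
  have holes_one {c : A} {f : Q} (hc : holes (act c) ∅ = {f}) :
      holes (run act [c]) ∅ = {f} := by
    simpa
  have holes_two {c s : A} {f : Q} (hc : holes (act c) ∅ = {f}) (hs : (act s).Injective) :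
      holes (run act [c, s]) ∅ = {act s f} := by
    simp [holes_comp, hc, holes_of_injective hs]
  have merged_eq {c : A} (hc : #(holes (act c) ∅) = 1) : merged (act c) = {e, act p e} := by
    refine (eq_of_subset_of_card_le (insert_subset ?_ (singleton_subset_iff.2 ?_)) ?_).symm
    · exact mem_merged_of_holes_run_eq H hraise (by simp) (holes_one ha) hc
    · exact mem_merged_of_holes_run_eq H hraise (by simp) (holes_two ha hp) hc
    · rw [card_pair hpe.symm]
      exact (card_merged_le _).trans (by omega)
  have ha' : #(holes (act a) ∅) = 1 := by simp [ha]
  refine ⟨fun s hs => ?_, fun c hc => ?_⟩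
  · simpa [merged_eq ha'] using
      mem_merged_of_holes_run_eq H hraise (by simp) (holes_two ha hs) ha'
  · obtain ⟨f, hf⟩ := card_eq_one.1 hc
    have hfa := mem_merged_of_holes_run_eq H hraise (by simp) (holes_one hf) hc
    have hqf := mem_merged_of_holes_run_eq H hraise (by simp) (holes_two hf hq) hc
    rw [merged_eq hc, mem_insert, mem_singleton] at hfa hqf
    obtain rfl : f = e := hfa.resolve_right (by grind)
    exact ⟨hf, merged_eq hc⟩

namespace Rigid

lemma injective_or_isFold (h : Rigid act k l) (hs : #(holes (act s) ∅) ≤ 1) :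
    (act s).Injective ∨ IsFold (act s) k l := by
  rw [← holes_empty_eq_empty_iff, ← card_eq_zero]
  exact (Nat.le_one_iff_eq_zero_or_eq_one.1 hs).imp_right (h.isFold s)

lemma card_holes_pair_le_two (h : Rigid act k l) (hs : #(holes (act s) ∅) ≤ 1)
    (hx : x = k ∨ x = l) : #(holes (act s) {x, z}) ≤ 2 := by
  rcases eq_or_ne z x with rfl | hzx
  · have := card_holes_le (act s) {z, z}
    simp only [pair_eq_singleton, card_singleton] at this ⊢
    omega
  rcases h.injective_or_isFold hs with hinj | hfold
  · rw [holes_of_injective hinj]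
    exact card_image_le.trans card_le_two
  · rw [hfold.holes_pair hx hzx]
    exact card_le_two

lemma card_holes_run_pair_le_two (h : Rigid act k l) (hs : #(holes (act s) ∅) ≤ 1)
    (hc : #(holes (act c) ∅) ≤ 1) (hz : z ≠ k) : #(holes (run act [s, c]) {k, z}) ≤ 2 := by
  simp only [run_cons, run_nil, Function.id_comp, holes_comp]
  rcases h.injective_or_isFold hs with hinj | hfold
  · rw [holes_of_injective hinj, image_insert, image_singleton]
    exact h.card_holes_pair_le_two hc (h.apply_eq_or_eq s hinj)
  · rw [hfold.holes_pair (.inl rfl) hz]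
    exact h.card_holes_pair_le_two hc (.inl rfl)

lemma exists_of_card_holes_run_eq_three (h : Rigid act k l) (hU : ∀ s ∈ U, #(holes (act s) ∅) ≤ 1)
    (hlen : U.length ≤ 3) (hy : y ≠ k) (hcard : #(holes (run act U) {k, y}) = 3) :
    ∃ p q, (act p).Injective ∧ (act q).Injective ∧ act p k = l ∧
      ¬(act q l = k ∨ act q l = l) ∧ ¬(act q (act p y) = k ∨ act q (act p y) = l) := by
  match U with
  | [] => simp [card_pair hy.symm] at hcard
  | [s] =>
    have := h.card_holes_pair_le_two (hU s (by simp)) (.inl rfl) (z := y)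
    simp only [run_cons, run_nil, Function.id_comp] at hcard
    omega
  | [s, c] =>
    have := h.card_holes_run_pair_le_two (hU s (by simp)) (hU c (by simp)) hy
    omega
  | [p, q, c] =>
    have hfirst (z : Q) (hz : z ≠ k) : holes (act p) {k, y} ≠ {k, z} := fun he => by
      have := h.card_holes_run_pair_le_two (hU q (by simp)) (hU c (by simp)) hz
      rw [← he, ← holes_comp, ← run_cons] at this
      omega
    have hp := (h.injective_or_isFold (hU p (by simp))).resolve_right fun hfold =>
      hfirst _ (hfold.apply_ne y) (hfold.holes_pair (.inl rfl) hy)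
    have hpy : holes (act p) {k, y} = {act p k, act p y} := by
      rw [holes_of_injective hp, image_insert, image_singleton]
    have hpk : act p k = l := (h.apply_eq_or_eq p hp).resolve_left fun hpk =>
      hfirst (act p y) (fun he => hy (hp (he.trans hpk.symm))) (by rw [hpy, hpk])
    have hlast (x z : Q) (he : holes (act q) {l, act p y} = {x, z}) :
        ¬(x = k ∨ x = l) := fun hx => by
      have := h.card_holes_pair_le_two (hU c (by simp)) hx (z := z)
      simp only [run_cons, run_nil, Function.id_comp, holes_comp, hpy, hpk, he] at hcard
      omega
    have hq := (h.injective_or_isFold (hU q (by simp))).resolve_right fun hfold =>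
      hlast _ _ (hfold.holes_pair (.inr rfl) fun he => hy (hp (he.trans hpk.symm))) (.inl rfl)
    have hqE : holes (act q) {l, act p y} = {act q l, act q (act p y)} := by
      rw [holes_of_injective hq, image_insert, image_singleton]
    exact ⟨p, q, hp, hq, hpk, hlast _ _ hqE, hlast _ _ (by rw [hqE, pair_comm])⟩

end Rigid

namespace Factorization

lemma holes_run_append_singleton (F : Factorization act a e R b U) :
    holes (run act (a :: (R ++ [b]))) ∅ = holes (act b) {run act R e} := by
  rw [← List.cons_append, holes_run_append, F.holes_run_cons F.injective]
  simp

lemma isFold (F : Factorization act a e R b U) (h : Rigid act k l)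
    (hb : #(holes (act b) ∅) ≤ 1) :
    IsFold (act b) k l ∧ run act R e ≠ k ∧ run act R e ≠ l := by
  have htwo := F.two_le
  rw [deficiency, F.holes_run_append_singleton] at htwo
  have hfold := (h.injective_or_isFold hb).resolve_left fun hinj => by
    simp [holes_of_injective hinj] at htwo
  have hmem : run act R e ∉ merged (act b) := fun hmem => by
    rw [holes_singleton_of_mem_merged hmem] at htwo
    omega
  simpa [hfold, hfold.merged_eq] using hmem

lemma earlyReach (F : Factorization act a e R b U) (hb : IsFold (act b) e l)
    (hp : (act p).Injective) (hq : (act q).Injective) (hk : act q (act p e) ≠ e)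
    (hl : act q (act p e) ≠ l) : EarlyReach act 4 {e, act b (act q (act p e))} := by
  have hholes : holes (run act [a, p, q, b]) ∅ = {e, act b (act q (act p e))} := by
    simp [holes_comp, F.holes_eq, holes_of_injective hp, holes_of_injective hq,
      hb.holes_singleton hk hl]
  rw [← hholes]
  refine EarlyReach.of_word (v := [a, p, q, b]) (by simp) ?_
  rw [deficiency, hholes, card_pair (hb.apply_ne _).symm]

lemma exists_config {p₂ p₃ p₄ : A} (F : Factorization act a e (p₂ :: p₃ :: p₄ :: R) b U)
    (hU : U.length ≤ 3) (hs : ∀ s ∈ a :: (p₂ :: p₃ :: p₄ :: R ++ b :: U), #(holes (act s) ∅) ≤ 1) :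
    ∃ p q, Config act e (act p₂ e) (act p₃ (act p₂ e)) b p q ∧
      ¬(act q (act p (act b (run act (p₂ :: p₃ :: p₄ :: R) e))) = e ∨
        act q (act p (act b (run act (p₂ :: p₃ :: p₄ :: R) e))) = act p₂ e) := by
  have hraise := F.isShortest.exists_two_lt_deficiency_tame hs
  have hp₂ := F.injective p₂ (by simp)
  have hp₃ := F.injective p₃ (by simp)
  have hlk : e ≠ act p₂ e := by simpa using F.run_take_ne 0 1 (by simp) (by simp)
  have hmk : e ≠ act p₃ (act p₂ e) := by simpa using F.run_take_ne 0 2 (by simp) (by simp)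
  have hml : act p₂ e ≠ act p₃ (act p₂ e) := by simpa using F.run_take_ne 1 2 (by simp) (by simp)
  have h := rigid_of_noEarlyDrop F.noEarlyDrop hraise F.holes_eq hp₂ hp₃ hlk.symm hmk.symm hml.symm
  obtain ⟨hb, hk, hl⟩ := F.isFold h (hs b (by simp))
  have hcard := F.isShortest.deficiency_eq
  rw [List.append_cons, ← List.cons_append, deficiency, holes_run_append,
    F.holes_run_append_singleton, hb.holes_singleton hk hl] at hcard
  obtain ⟨p, q, hp, hq, hpk, hql, hqp⟩ := h.exists_of_card_holes_run_eq_three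
    (fun s hsU => hs s (by simp [hsU])) hU (hb.apply_ne _) hcard
  have hE := F.earlyReach hb hp₂ hp₃ hmk.symm hml.symm
  have hE' := F.earlyReach hb hp hq (by grind) (by grind)
  rw [hpk] at hE'
  have hpair := eq_of_earlyReach_four F.noEarlyDrop hraise (card_pair (hb.apply_ne _).symm)
    (card_pair (hb.apply_ne _).symm) hE hE'
  have hbm : act b (act p₃ (act p₂ e)) = act b (act q (act p₂ e)) := by
    grind [pair_eq_pair_iff, hb.apply_ne]
  have hm : act q (act p₂ e) = act p₃ (act p₂ e) := by
    grind [hb.eq_or_eq]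
  exact ⟨p, q, ⟨F.noEarlyDrop, hraise, h, hb, hp, hq, hpk, hm, hmk.symm, hml.symm, hE⟩, hqp⟩

lemma false_of_tame {p₂ p₃ p₄ : A} (F : Factorization act a e (p₂ :: p₃ :: p₄ :: R) b U)
    (hU : U.length ≤ 3) (hs : ∀ s ∈ a :: (p₂ :: p₃ :: p₄ :: R ++ b :: U), #(holes (act s) ∅) ≤ 1) :
    False := by
  obtain ⟨p, q, C, hqp⟩ := F.exists_config hU hs
  have hp₄ := F.injective p₄ (by simp)
  have hk : e ≠ act p₄ (act p₃ (act p₂ e)) := by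
    simpa using F.run_take_ne 0 3 (by simp) (by simp)
  have hl : act p₂ e ≠ act p₄ (act p₃ (act p₂ e)) := by
    simpa using F.run_take_ne 1 3 (by simp) (by simp)
  have hm : act p₃ (act p₂ e) ≠ act p₄ (act p₃ (act p₂ e)) := by
    simpa using F.run_take_ne 2 3 (by simp) (by simp)
  rcases R with _ | ⟨s, R⟩
  · exact hqp (by simpa using C.target_apply_b hp₄ hk.symm hl.symm hm.symm)
  · have hmem := C.apply_apply_mem hp₄ hk.symm hl.symm hm.symm (F.injective s (by simp))
    have hne (i : ℕ) (hi : i < 4) := F.run_take_ne i 4 hi (by simp)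
    simp only [mem_insert, mem_singleton] at hmem
    rcases hmem with h | h | h | h
    exacts [hne 0 (by simp) h.symm, hne 1 (by simp) h.symm, hne 2 (by simp) h.symm,
      hne 3 (by simp) h.symm]

theorem four_le_length_of_tame (F : Factorization act a e R b U)
    (hs : ∀ s ∈ a :: (R ++ b :: U), #(holes (act s) ∅) ≤ 1) : 4 ≤ U.length := by
  by_contra! hU
  have hR := F.three_le_length
  obtain _ | ⟨p₂, _ | ⟨p₃, _ | ⟨p₄, R⟩⟩⟩ := R
  · simp at hR
  · simp at hR
  · simp at hR
  · exact F.false_of_tame (by omega) hs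

end Factorization
end Tame

section LastLetter

variable {Q A : Type*} [DecidableEq Q] [Fintype Q] {act : A → Q → Q} {a b d : A} {e t : Q}
  {q R U v : List A}

lemma deficiency_cons_eq_two (H : NoEarlyDrop act) (hd : #(holes (act d) ∅) = 2)
    (hv : ∀ s ∈ v, #(holes (act s) ∅) ≤ 1) (hlen : v.length ≤ 8) : deficiency act (d :: v) = 2 := by
  have hE : EarlyReach act 1 (holes (act d) ∅) := EarlyReach.of_word (v := [d]) (by simp) hd.ge
  have := hE.survives H hd (n := 8) (by simp) (v.attachWith _ hv) (by simpa)
  rw [run_tame, List.unattach_attachWith, ← holes_comp, ← run_cons, hd] at this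
  exact le_antisymm this (hd.ge.trans (deficiency_le_append_left act [d] v))

namespace Factorization

lemma run_mem_merged (F : Factorization act a e R b U) (hd : #(holes (act d) ∅) = 2)
    (hq : ∀ s ∈ q, (act s).Injective) (hlen : q.length + 1 < R.length + U.length + 1) :
    run act q e ∈ merged (act d) :=
  F.isShortest.mem_merged hd (F.holes_run_cons hq) (by grind)

lemma exists_companion (F : Factorization act a e R b U) (hd : #(holes (act d) ∅) = 2) :
    ∃ t ≠ e, holes (run act [d, a]) ∅ = {e, t} := by
  have hcard : #(holes (run act [d, a]) ∅) = 2 :=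
    deficiency_cons_eq_two F.noEarlyDrop hd (v := [a]) (by simp [F.holes_eq]) (by simp)
  have hmem : e ∈ holes (run act [d, a]) ∅ :=
    holes_run_subset_append act [d] [a] (by simp [F.holes_eq])
  obtain ⟨t, ht⟩ := card_eq_one.1 ((card_erase_of_mem hmem).trans (by rw [hcard]))
  have hte : t ∈ (holes (run act [d, a]) ∅).erase e := ht ▸ mem_singleton_self t
  exact ⟨t, ne_of_mem_erase hte, by rw [← insert_erase hmem, ht]⟩

lemma run_mem_merged_iff (F : Factorization act a e R b U) (hd : #(holes (act d) ∅) = 2)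
    (ht : holes (run act [d, a]) ∅ = {e, t}) (hq : ∀ s ∈ q, (act s).Injective)
    (hlen : q.length ≤ 6) : run act q e ∈ merged (act d) ↔ run act q t ∈ merged (act d) := by
  have hne : #(holes (act d) {run act q e, run act q t}) ≠ 3 := by
    have := F.noEarlyDrop [d] (a :: (q ++ [d])) (by simp) hd.ge (by grind)
    rw [show [d] ++ a :: (q ++ [d]) = [d, a] ++ q ++ [d] by simp, deficiency, holes_run_append,
      holes_run_append, ht, holes_of_injective (injective_run hq)] at this
    simpa [image_insert] using this
  have hthree {x z : Q} (hx : x ∈ merged (act d)) (hz : z ∉ merged (act d)) :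
      #(holes (act d) {x, z}) = 3 := by
    rw [card_holes_pair hx hz, hd]
  constructor <;> intro hx <;> by_contra hz
  · exact hne (hthree hx hz)
  · exact hne (pair_comm (run act q e) _ ▸ hthree hx hz)

/-- Neither `run act R e` nor `run act R t` is counted, while `merged (act d)` has at most four
elements. -/
lemma card_filter_le_two {r : A} (F : Factorization act a e (R ++ [r]) d [])
    (hd : #(holes (act d) ∅) = 2) (hlen : R.length ≤ 3) (hte : t ≠ e)
    (ht : holes (run act [d, a]) ∅ = {e, t}) :
    act r (run act R t) ∉ merged (act d) ∧
      #{x ∈ merged (act d) | act r x ∈ merged (act d)} ≤ 2 := by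
  have hR (s) (hs : s ∈ R) : (act s).Injective := F.injective s (by simp [hs])
  have he : run act R e ∈ merged (act d) := F.run_mem_merged hd hR (by simp)
  have hre : act r (run act R e) ∉ merged (act d) := fun hmem => by
    have := F.isShortest.deficiency_eq
    rw [deficiency, F.holes_run_append_singleton, run_append,
      holes_singleton_of_mem_merged (by simpa using hmem)] at this
    omega
  have hrt : act r (run act R t) ∉ merged (act d) := by
    simpa using mt (F.run_mem_merged_iff hd ht F.injective (by simp; omega)).2 (by simpa using hre)
  have hpair : ({run act R e, run act R t} : Finset Q) ⊆
      {x ∈ merged (act d) | ¬act r x ∈ merged (act d)} := by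
    have := (F.run_mem_merged_iff hd ht hR (by omega)).1 he
    grind
  have hle := card_le_card hpair
  rw [card_pair ((injective_run hR).ne hte.symm)] at hle
  have := card_filter_add_card_filter_not (s := merged (act d)) fun x => act r x ∈ merged (act d)
  have := card_merged_le (act d)
  exact ⟨hrt, by omega⟩

lemma length_le_four (F : Factorization act a e R d []) (hd : #(holes (act d) ∅) = 2) :
    R.length ≤ 4 := by
  have := F.le_card_of_run_take_mem (n := R.length) (S := merged (act d)) (by omega) fun i hi =>
    F.run_mem_merged hd (fun s hs => F.injective s (List.mem_of_mem_take hs)) (by grind)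
  have := card_merged_le (act d)
  omega

lemma run_mem_filter {r : A} (F : Factorization act a e (R ++ [r]) d [])
    (hd : #(holes (act d) ∅) = 2) (hR : R.length ≤ 3) (ht : holes (run act [d, a]) ∅ = {e, t})
    (hq : ∀ s ∈ q, (act s).Injective) (hlen : q.length < R.length) :
    run act q e ∈ ({x ∈ merged (act d) | act r x ∈ merged (act d)} : Finset Q) ∧
      run act q t ∈ ({x ∈ merged (act d) | act r x ∈ merged (act d)} : Finset Q) := by
  have hqr : ∀ s ∈ q ++ [r], (act s).Injective := by
    simpa [or_imp, forall_and] using ⟨hq, F.injective r (by simp)⟩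
  have he := F.run_mem_merged hd hq (by grind)
  have hre := F.run_mem_merged hd hqr (by grind)
  have ht' := (F.run_mem_merged_iff hd ht hq (by omega)).1 he
  have hrt' := (F.run_mem_merged_iff hd ht hqr (by grind)).1 hre
  simp_all

theorem false_of_last_eq (F : Factorization act a e R d []) (hd : #(holes (act d) ∅) = 2) :
    False := by
  obtain ⟨t, hte, ht⟩ := F.exists_companion hd
  have hR4 := F.length_le_four hd
  have hR3 := F.three_le_length
  obtain rfl | ⟨R, r, rfl⟩ := R.eq_nil_or_concat'
  · simp at hR3
  simp only [List.length_append, List.length_singleton] at hR3 hR4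
  obtain ⟨hrt, hS⟩ := F.card_filter_le_two hd (by omega) hte ht
  set S : Finset Q := {x ∈ merged (act d) | act r x ∈ merged (act d)}
  have hmem {q : List A} (hq : ∀ s ∈ q, (act s).Injective) (hlen : q.length < R.length) :
      run act q e ∈ S ∧ run act q t ∈ S :=
    F.run_mem_filter hd (by omega) ht hq hlen
  have hR2 : R.length ≤ 2 := by
    refine (F.le_card_of_run_take_mem (by grind) fun i hi => ?_).trans hS
    rw [List.take_append_of_le_length hi.le]
    exact (hmem (fun s hs => F.injective s (by simp [List.mem_of_mem_take hs])) (by simpa)).1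
  obtain ⟨p₂, p₃, rfl⟩ := List.length_eq_two.1 (le_antisymm hR2 (by omega))
  have hp₂ := F.injective p₂ (by simp)
  have he := (hmem (q := []) (by simp) (by simp)).1
  obtain ⟨hp₂e, hp₂t⟩ := hmem (q := [p₂]) (by simpa) (by simp)
  have hep₂ : e ≠ act p₂ e := by simpa using F.run_take_ne 0 1 (by simp) (by simp)
  have hS_eq : {e, act p₂ e} = S := eq_of_subset_of_card_le
    (insert_subset he (singleton_subset_iff.2 hp₂e)) (by rwa [card_pair hep₂])
  have hp₂t_eq : act p₂ t = e := by
    simp only [← hS_eq, run_cons, run_nil, Function.id_comp, mem_insert, mem_singleton] at hp₂t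
    exact hp₂t.resolve_right fun h => hte (hp₂ h)
  have hshort := F.run_mem_merged hd (q := [p₃, r])
    (by simp [F.injective p₃ (by simp), F.injective r (by simp)]) (by simp)
  exact hrt (by simpa [hp₂t_eq] using hshort)

theorem false_of_append_singleton (F : Factorization act a e R b (U ++ [d]))
    (hd : #(holes (act d) ∅) = 2) (hU : U.length ≤ 2) : False := by
  have hR : R.length ≤ 3 := by
    by_contra! hR
    have hM := F.le_card_of_run_take_mem (n := 5) (S := merged (act d)) (by omega) fun i hi =>
      F.run_mem_merged hd (fun s hs => F.injective s (List.mem_of_mem_take hs)) (by grind)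
    have := card_merged_le (act d)
    omega
  have hv : ∀ s ∈ a :: (R ++ b :: U), #(holes (act s) ∅) ≤ 1 := fun s hs => by
    obtain ⟨x, y, hxy⟩ := List.append_of_mem hs
    exact F.card_holes_le_one (x := x) (y := y ++ [d]) (by grind) (by simp)
  have hlow : 2 ≤ deficiency act (a :: (R ++ b :: U)) := by
    simpa using F.two_le.trans (deficiency_le_append_left act _ U)
  have hdef := deficiency_cons_eq_two F.noEarlyDrop hd hv (by grind)
  have heq : holes (run act (a :: (R ++ b :: U))) ∅ = holes (run act (d :: a :: (R ++ b :: U))) ∅ :=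
    eq_of_subset_of_card_le (holes_run_subset_append act [d] _) (hdef.le.trans hlow)
  refine F.noEarlyDrop [d] (a :: (R ++ b :: (U ++ [d]))) (by simp) hd.ge (by grind) ?_
  rw [← F.isShortest.deficiency_eq,
    show a :: (R ++ b :: (U ++ [d])) = (a :: (R ++ b :: U)) ++ [d] by simp, ← List.append_assoc,
    deficiency, deficiency, holes_run_append, holes_run_append _ _ [d], heq, List.singleton_append]

/-- If `b :: U` has length at most four, its last letter cannot create two holes, so that all
letters create at most one. -/
theorem four_le_length (F : Factorization act a e R b U) : 4 ≤ U.length := by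
  by_contra! hU
  obtain ⟨x, d, hxd⟩ := (b :: U).eq_nil_or_concat'.resolve_left (by simp)
  have hw : a :: (R ++ b :: U) = a :: (R ++ x) ++ [d] := by simp [hxd]
  have hd : #(holes (act d) ∅) ≤ 1 := by
    by_contra! hd
    have hd2 := le_antisymm (F.card_holes_last_le_two hw) hd
    obtain rfl | ⟨U, c, rfl⟩ := U.eq_nil_or_concat'
    · obtain ⟨-, rfl⟩ : [] = x ∧ b = d := by
        simpa using List.append_inj' (show [] ++ [b] = x ++ [d] from hxd) rfl
      exact F.false_of_last_eq hd2
    · obtain ⟨-, rfl⟩ : b :: U = x ∧ c = d := by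
        rw [← List.cons_append] at hxd
        simpa using List.append_inj' hxd rfl
      exact F.false_of_append_singleton hd2 (by grind)
  refine hU.not_ge (F.four_le_length_of_tame fun s hs => ?_)
  obtain ⟨y, z, hyz⟩ := List.append_of_mem hs
  rcases eq_or_ne z [] with rfl | hz
  · obtain rfl : d = s := by simpa using (List.append_inj' (hw.symm.trans hyz) rfl).2
    exact hd
  · exact F.card_holes_le_one hyz hz

end Factorization
end LastLetter

section Profile

variable {Q A : Type*} [DecidableEq Q] [Fintype Q] {act : A → Q → Q} {w : List A}

theorem IsShortest.profile (hw : IsShortest act w) (H : NoEarlyDrop act) (hlen : w.length ≤ 9) :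
    w.length = 9 ∧ (∀ i, 1 ≤ i → i ≤ 4 → deficiency act (w.take i) = 1) ∧
      ∀ i, 5 ≤ i → i ≤ 8 → deficiency act (w.take i) = 2 := by
  obtain ⟨a, e, R, b, U, rfl, F⟩ := exists_factorization H hw hlen
  have hRU : R.length = 3 ∧ U.length = 4 := by
    grind [F.three_le_length, F.four_le_length]
  refine ⟨by grind, fun i hi hi' => ?_, fun i hi hi' => le_antisymm ?_ ?_⟩
  · obtain ⟨i, rfl⟩ := Nat.exists_eq_add_of_le' hi
    rw [List.take_succ_cons, List.take_append_of_le_length (by omega), deficiency,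
      F.holes_run_cons fun r hr => F.injective r (List.mem_of_mem_take hr), card_singleton]
  · refine IsShortest.deficiency_le_two (v := (a :: (R ++ b :: U)).drop i) ?_
      (by rw [Ne, List.drop_eq_nil_iff]; grind)
    rwa [List.take_append_drop]
  · have hlong : a :: (R ++ b :: U) = (a :: (R ++ [b])) ++ U := by simp
    rw [hlong, List.take_append, List.take_of_length_le (by grind)]
    exact F.two_le.trans (deficiency_le_append_left act _ _)

lemma isShortest_of_length_le (H : NoEarlyDrop act) (hlen : w.length ≤ 9)
    (hw : deficiency act w = 3) : IsShortest act w := by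
  obtain ⟨v, hv, hmin⟩ := exists_shortest (P := fun v => deficiency act v = 3) ⟨w, hw⟩
  have hv : IsShortest act v := ⟨hv, fun u hu => not_lt.1 fun h => hmin u h hu⟩
  have hv9 := (hv.profile H ((hv.length_le w hw).trans hlen)).1
  exact ⟨hw, fun u hu => hlen.trans (hv9 ▸ hv.length_le u hu)⟩

lemma noEarlyDrop_of_deficiency_take_lt
    (h : ∀ w, w.length ≤ 9 → deficiency act w = 3 → deficiency act (w.take 4) < 2) :
    NoEarlyDrop act := by
  intro u v hu hdef hlen h3
  refine (h (u ++ v) (by simpa) h3).not_ge ?_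
  rw [List.take_append, List.take_of_length_le hu]
  exact hdef.trans (deficiency_le_append_left act u _)

theorem profile_iff (act : A → Q → Q) :
    (∀ w : List A, w.length ≤ 9 → deficiency act w = 3 →
      4 ≤ w.length ∧ deficiency act (w.take 4) < 2) ↔
    ∀ w : List A, w.length ≤ 9 → deficiency act w = 3 →
      w.length = 9 ∧ (∀ i, 1 ≤ i → i ≤ 4 → deficiency act (w.take i) = 1) ∧
        ∀ i, 5 ≤ i → i ≤ 8 → deficiency act (w.take i) = 2 := by
  refine ⟨fun h w hlen hw => ?_, fun h w hlen hw => ?_⟩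
  · have H := noEarlyDrop_of_deficiency_take_lt fun w hlen hw => (h w hlen hw).2
    exact (isShortest_of_length_le H hlen hw).profile H hlen
  · obtain ⟨hlen, hone, -⟩ := h w hlen hw
    exact ⟨by omega, by simp [hone 4]⟩

end Profile
end DeficiencyThree

open DeficiencyThree

theorem stmt_14 {Q A : Type*} [Fintype Q] [DecidableEq Q] (act : A → Q → Q)
    (h : ∃ w : List A, w.length ≤ 9 ∧
      (wordImage act Finset.univ w).card = Fintype.card Q - 3) :
    (∀ w : List A, w.length ≤ 9 →
      (wordImage act Finset.univ w).card = Fintype.card Q - 3 →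
      4 ≤ w.length ∧
      Fintype.card Q - 2 < (wordImage act Finset.univ (w.take 4)).card) ↔
    (∀ w : List A, w.length ≤ 9 →
      (wordImage act Finset.univ w).card = Fintype.card Q - 3 →
      w.length = 9 ∧
      (∀ i : ℕ, 1 ≤ i → i ≤ 4 →
        (wordImage act Finset.univ (w.take i)).card = Fintype.card Q - 1) ∧
      (∀ i : ℕ, 5 ≤ i → i ≤ 8 →
        (wordImage act Finset.univ (w.take i)).card = Fintype.card Q - 2)) := by
  have hcard := card_wordImage_add_deficiency act
  obtain hQ | hQ := isEmpty_or_nonempty Q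
  · have hnil : (wordImage act Finset.univ []).card = Fintype.card Q - 3 := by
      simp [wordImage]
    exact iff_of_false (fun h => by simpa using (h [] (by simp) hnil).1)
      (fun h => by simpa using (h [] (by simp) hnil).1)
  · have hn : 4 ≤ Fintype.card Q := by
      obtain ⟨w, -, hw⟩ := h
      have := (Finset.univ_nonempty (α := Q)).image (run act w)
      rw [← wordImage_eq_image_run, ← Finset.card_pos] at this
      omega
    have hlt (w) : Fintype.card Q - 2 < (wordImage act Finset.univ w).card ↔
        deficiency act w < 2 := by grind
    have heq {k : ℕ} (hk : k ≤ 3) (w) :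
        (wordImage act Finset.univ w).card = Fintype.card Q - k ↔ deficiency act w = k := by
      grind
    simp only [hlt, heq (show 1 ≤ 3 by simp), heq (show 2 ≤ 3 by simp), heq le_rfl]
    exact profile_iff act
end

section
/- Let (Q, Σ) be a DFA with n = |Q| satisfying hypothesis (H). Let p₁ ≠ p₂ be states and b, a ∈ Σ letters such that Qb = Q∖{p₁}, p₁b = p₂b, Qa = Q, and p₁a = p₂. If the orbit X = {p₁, p₁a, p₁a², …} of p₁ under a satisfies |X| ≥ 4, then there exists a word w over Σ with |w| ≤ 9 and |Qw| ≤ n − 3. -/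
/-!
A word is tracked through the states it misses. Write `p₁, p₂, p₃, p₄` for the first four states of
the orbit of `p₁` under the permutation `a`. The letter `b` always misses `p₁`, and it carries
missed states outside `{p₁, p₂}` injectively to missed states. So if a word `w` misses `p₁` and some
`y ≠ p₁`, then `w aˡ b` misses three states as soon as `p₁ aˡ` and `y aˡ` both avoid `{p₁, p₂}`.
Since `p₃` and `p₄` avoid this pair, `l = 2` or `l = 3` works unless `y a² = p₁`.

The words `b a² b` and `b a³ b` both miss `p₁`, and they miss `p₃ b` and `p₄ b` respectively. Hence
one of the words `b aᵏ b aˡ b` with `k, l ∈ {2, 3}` is as required, for otherwise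
`p₃ b a² = p₁ = p₄ b a²`, so that `p₃ b = p₄ b`, although `b` merges only `p₁` and `p₂`.
-/

open Function

section FiniteMaps

variable {α β : Type*} [Fintype α] [DecidableEq β] {f : α → β} {p q : α}

theorem injOn_compl_singleton_of_apply_eq (hcard : Fintype.card α ≤ (Finset.univ.image f).card + 1)
    (hpq : p ≠ q) (hf : f p = f q) : Set.InjOn f {p}ᶜ := by
  classical
  have himage : ({p}ᶜ : Finset α).image f = Finset.univ.image f := by
    refine (Finset.image_subset_image (Finset.subset_univ _)).antisymm fun y hy ↦ ?_
    obtain ⟨x, -, rfl⟩ := Finset.mem_image.1 hy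
    obtain rfl | hx := eq_or_ne x p
    · exact hf ▸ Finset.mem_image_of_mem f (by simpa using hpq.symm)
    · exact Finset.mem_image_of_mem f (by simpa using hx)
  rw [← Finset.coe_singleton, ← Finset.coe_compl]
  refine Finset.injOn_of_card_image_eq (Finset.card_image_le.antisymm ?_)
  rw [himage, Finset.card_compl, Finset.card_singleton]
  omega

theorem eq_of_apply_eq_of_notMem_pair (hcard : Fintype.card α ≤ (Finset.univ.image f).card + 1)
    (hpq : p ≠ q) (hf : f p = f q) {x y : α} (hx : x ∉ ({p, q} : Set α)) (hxy : f y = f x) :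
    y = x := by
  have hinj := injOn_compl_singleton_of_apply_eq hcard hpq hf
  obtain ⟨hxp, hxq⟩ : x ≠ p ∧ x ≠ q := by simpa using hx
  obtain rfl | hy := eq_or_ne y p
  · exact absurd (hinj hpq.symm hxp (hf.symm.trans hxy)).symm hxq
  · exact hinj hy hxp hxy

end FiniteMaps

section Orbits

variable {α : Type*} {f : α → α} {p y : α} {k : ℕ}

theorem encard_iterates_le_of_isPeriodicPt (hk : 0 < k) (h : IsPeriodicPt f k p) :
    {x | ∃ m : ℕ, f^[m] p = x}.encard ≤ k := by
  have hsub : {x | ∃ m : ℕ, f^[m] p = x} ⊆ (fun m ↦ f^[m] p) '' Finset.range k := by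
    rintro _ ⟨m, rfl⟩
    exact ⟨m % k, by simpa using Nat.mod_lt m hk, h.iterate_mod_apply m⟩
  calc {x | ∃ m : ℕ, f^[m] p = x}.encard
      ≤ ((fun m ↦ f^[m] p) '' Finset.range k).encard := Set.encard_le_encard hsub
    _ ≤ (Finset.range k : Set ℕ).encard := Set.encard_image_le _ _
    _ = k := by rw [Set.encard_coe_eq_coe_finsetCard, Finset.card_range]

theorem iterate_succ_notMem_pair (hf : Injective f) (hk : ¬IsPeriodicPt f k p)
    (hk' : ¬IsPeriodicPt f (k + 1) p) : f^[k + 1] p ∉ ({p, f p} : Set α) := by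
  rintro (h | h)
  · exact hk' h
  · exact hk (hf (by rwa [← iterate_succ_apply' f k p]))

theorem eq_of_mem_pair_of_apply_mem_pair (hp : f (f p) ∉ ({p, f p} : Set α))
    (hy : y ∈ ({p, f p} : Set α)) (hfy : f y ∈ ({p, f p} : Set α)) : y = p := by
  rcases hy with rfl | rfl
  · rfl
  · exact absurd hfy hp

end Orbits

/-- The states outside `Qw`, that is, those not reached by the word `w` from any state. They are
what one counts to bound `|Qw|` from above, and make sense for infinite `Q` as well. -/
def missedStates {Q A : Type*} (act : A → Q → Q) (w : List A) : Set Q :=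
  (Set.range fun q ↦ w.foldl (fun r s ↦ act s r) q)ᶜ

section WordImage

variable {Q A : Type*} [DecidableEq Q] (act : A → Q → Q)

theorem wordImage_eq_image_foldl (R : Finset Q) (w : List A) :
    wordImage act R w = R.image fun q ↦ w.foldl (fun r s ↦ act s r) q := by
  induction w generalizing R with
  | nil => simp [wordImage]
  | cons s w ih => simp [wordImage, ih, Finset.image_image, comp_def]

theorem coe_compl_wordImage_univ [Fintype Q] (w : List A) :
    ((wordImage act Finset.univ w)ᶜ : Finset Q) = missedStates act w := by
  simp [wordImage_eq_image_foldl, missedStates]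

variable {act}

theorem card_wordImage_univ_le [Fintype Q] {w : List A} {k : ℕ}
    (hk : k ≤ (missedStates act w).encard) :
    (wordImage act Finset.univ w).card ≤ Fintype.card Q - k := by
  rw [← coe_compl_wordImage_univ, Set.encard_coe_eq_coe_finsetCard, Nat.cast_le] at hk
  have := Finset.card_add_card_compl (wordImage act Finset.univ w)
  omega

end WordImage

section MissedStates

variable {Q A : Type*} {act : A → Q → Q} {w : List A} {a b s : A} {p₁ x y : Q}

theorem mem_missedStates_append_singleton :
    x ∈ missedStates act (w ++ [s]) ↔ ∀ y, act s y = x → y ∈ missedStates act w := by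
  simp only [missedStates, Set.mem_compl_iff, Set.mem_range, List.foldl_append, List.foldl_cons,
    List.foldl_nil]
  grind

theorem mem_missedStates_of_notMem_range (hx : x ∉ Set.range (act s)) :
    x ∈ missedStates act (w ++ [s]) :=
  mem_missedStates_append_singleton.2 fun y hy ↦ absurd ⟨y, hy⟩ hx

theorem apply_mem_missedStates (hx : x ∈ missedStates act w)
    (hs : ∀ y, act s y = act s x → y = x) : act s x ∈ missedStates act (w ++ [s]) :=
  mem_missedStates_append_singleton.2 fun y hy ↦ hs y hy ▸ hx

theorem iterate_mem_missedStates (ha : Injective (act a)) (hx : x ∈ missedStates act w) (k : ℕ) :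
    (act a)^[k] x ∈ missedStates act (w ++ List.replicate k a) := by
  induction k with
  | zero => simpa using hx
  | succ k ih =>
    rw [iterate_succ_apply', List.replicate_succ', ← List.append_assoc]
    exact apply_mem_missedStates ih fun y hy ↦ ha hy

theorem encard_add_one_le_encard_missedStates {S : Set Q} (hsurj : ¬Surjective (act s))
    (hS : S ⊆ missedStates act w) (hs : ∀ x ∈ S, ∀ y, act s y = act s x → y = x) :
    S.encard + 1 ≤ (missedStates act (w ++ [s])).encard := by
  obtain ⟨z, hz⟩ : ∃ z, z ∉ Set.range (act s) := by simpa [Surjective] using hsurj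
  have hinj : Set.InjOn (act s) S := fun x _ y hy hxy ↦ hs y hy x hxy
  have hzS : z ∉ act s '' S := fun h ↦ hz (Set.image_subset_range _ _ h)
  rw [← hinj.encard_image, ← Set.encard_insert_of_notMem hzS]
  refine Set.encard_le_encard (Set.insert_subset (mem_missedStates_of_notMem_range hz) ?_)
  rintro _ ⟨x, hx, rfl⟩
  exact apply_mem_missedStates (hS hx) (hs x hx)

theorem three_le_encard_missedStates_replicate (ha : Injective (act a))
    (hb : p₁ ∉ Set.range (act b))
    (hb_fiber : ∀ x ∉ ({p₁, act a p₁} : Set Q), ∀ y, act b y = act b x → y = x)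
    (hp : p₁ ∈ missedStates act w) (hy : y ∈ missedStates act w) (hyp : y ≠ p₁) {k : ℕ}
    (hpk : (act a)^[k] p₁ ∉ ({p₁, act a p₁} : Set Q))
    (hyk : (act a)^[k] y ∉ ({p₁, act a p₁} : Set Q)) :
    3 ≤ (missedStates act (w ++ List.replicate k a ++ [b])).encard := by
  have hpair : ({(act a)^[k] p₁, (act a)^[k] y} : Set Q).encard = 2 :=
    Set.encard_pair ((ha.iterate k).ne hyp.symm)
  rw [← two_add_one_eq_three, ← hpair]
  refine encard_add_one_le_encard_missedStates (fun hsurj ↦ hb (hsurj p₁)) ?_ ?_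
  · exact Set.pair_subset (iterate_mem_missedStates ha hp k) (iterate_mem_missedStates ha hy k)
  · rintro x (rfl | rfl)
    · exact hb_fiber _ hpk
    · exact hb_fiber _ hyk

theorem exists_three_le_encard_missedStates_or_iterate_eq (ha : Injective (act a))
    (hb : p₁ ∉ Set.range (act b))
    (hb_fiber : ∀ x ∉ ({p₁, act a p₁} : Set Q), ∀ y, act b y = act b x → y = x)
    (hp₃ : (act a)^[2] p₁ ∉ ({p₁, act a p₁} : Set Q))
    (hp₄ : (act a)^[3] p₁ ∉ ({p₁, act a p₁} : Set Q))
    (hp : p₁ ∈ missedStates act w) (hy : y ∈ missedStates act w) (hyp : y ≠ p₁) :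
    (∃ v : List A, v.length ≤ w.length + 4 ∧ 3 ≤ (missedStates act v).encard) ∨
      (act a)^[2] y = p₁ := by
  by_cases hy₂ : (act a)^[2] y ∈ ({p₁, act a p₁} : Set Q)
  · by_cases hy₃ : (act a)^[3] y ∈ ({p₁, act a p₁} : Set Q)
    · rw [iterate_succ_apply'] at hy₃
      exact .inr (eq_of_mem_pair_of_apply_mem_pair hp₃ hy₂ hy₃)
    · exact .inl ⟨_, by simp,
        three_le_encard_missedStates_replicate ha hb hb_fiber hp hy hyp hp₄ hy₃⟩
  · exact .inl ⟨_, by simp,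
      three_le_encard_missedStates_replicate ha hb hb_fiber hp hy hyp hp₃ hy₂⟩

end MissedStates

theorem stmt_16_general {Q A : Type*} (act : A → Q → Q) (p₁ : Q) (b a : A)
    (hb : p₁ ∉ Set.range (act b))
    (hb_fiber : ∀ x ∉ ({p₁, act a p₁} : Set Q), ∀ y, act b y = act b x → y = x)
    (ha : Injective (act a)) (hX : 4 ≤ {x : Q | ∃ k : ℕ, (act a)^[k] p₁ = x}.encard) :
    ∃ w : List A, w.length ≤ 9 ∧ 3 ≤ (missedStates act w).encard := by
  have hperiod {k : ℕ} (hk : 0 < k) (hk4 : k < 4) : ¬IsPeriodicPt (act a) k p₁ := fun h ↦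
    (Nat.cast_lt.2 hk4).not_ge (hX.trans (encard_iterates_le_of_isPeriodicPt hk h))
  have hperiod₁ : ¬IsPeriodicPt (act a) 1 p₁ := hperiod (by lia) (by lia)
  have hperiod₂ : ¬IsPeriodicPt (act a) 2 p₁ := hperiod (by lia) (by lia)
  have hperiod₃ : ¬IsPeriodicPt (act a) 3 p₁ := hperiod (by lia) (by lia)
  have hp₃ := iterate_succ_notMem_pair ha hperiod₁ hperiod₂
  have hp₄ := iterate_succ_notMem_pair ha hperiod₂ hperiod₃
  have hp (w : List A) : p₁ ∈ missedStates act (w ++ [b]) := mem_missedStates_of_notMem_range hb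
  have hb_ne (x : Q) : act b x ≠ p₁ := fun h ↦ hb ⟨x, h⟩
  have hmissed {k : ℕ} (hk : (act a)^[k] p₁ ∉ ({p₁, act a p₁} : Set Q)) :
      act b ((act a)^[k] p₁) ∈ missedStates act ([b] ++ List.replicate k a ++ [b]) :=
    apply_mem_missedStates (iterate_mem_missedStates ha (hp []) k) (hb_fiber _ hk)
  have hshift {k : ℕ} (hk : (act a)^[k] p₁ ∉ ({p₁, act a p₁} : Set Q)) :=
    exists_three_le_encard_missedStates_or_iterate_eq ha hb hb_fiber hp₃ hp₄ (hp _) (hmissed hk)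
      (hb_ne _)
  obtain ⟨w, hw, hw_missed⟩ | hy := hshift hp₃
  · exact ⟨w, hw.trans (by simp), hw_missed⟩
  obtain ⟨w, hw, hw_missed⟩ | hz := hshift hp₄
  · exact ⟨w, hw.trans (by simp), hw_missed⟩
  have hp₄_eq : (act a)^[3] p₁ = (act a)^[2] p₁ :=
    hb_fiber _ hp₃ _ (ha.iterate 2 (hz.trans hy.symm))
  exact absurd (ha.iterate 2 hp₄_eq) hperiod₁

theorem stmt_16 {Q A : Type*} [Fintype Q] [DecidableEq Q] (act : A → Q → Q)
    (hH1 : ∃ w : List A, (wordImage act Finset.univ w).card ≤ Fintype.card Q - 2)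
    (hH2 : ∀ w : List A, w.length ≤ 3 →
      Fintype.card Q - 2 < (wordImage act Finset.univ w).card)
    (p₁ p₂ : Q) (hp : p₁ ≠ p₂) (b a : A)
    (hb : Finset.univ.image (act b) = Finset.univ \ {p₁})
    (hb12 : act b p₁ = act b p₂)
    (ha : Finset.univ.image (act a) = Finset.univ)
    (ha1 : act a p₁ = p₂)
    (hX : 4 ≤ Set.ncard {x : Q | ∃ k : ℕ, (act a)^[k] p₁ = x}) :
    ∃ w : List A, w.length ≤ 9 ∧
      (wordImage act Finset.univ w).card ≤ Fintype.card Q - 3 := by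
  subst ha1
  have hb_range : p₁ ∉ Set.range (act b) := by
    rintro ⟨x, hx⟩
    simpa [hb, hx] using Finset.mem_image_of_mem (act b) (Finset.mem_univ x)
  have hb_card : Fintype.card Q ≤ (Finset.univ.image (act b)).card + 1 := by
    rw [hb, ← Finset.compl_eq_univ_sdiff, Finset.card_compl, Finset.card_singleton]
    omega
  have ha_inj : Injective (act a) :=
    Finite.injective_iff_surjective.2 (by simpa [Finset.eq_univ_iff_forall, Surjective] using ha)
  obtain ⟨w, hw, h3⟩ := stmt_16_general act p₁ b a hb_range
    (fun _ hx _ ↦ eq_of_apply_eq_of_notMem_pair hb_card hp hb12 hx) ha_inj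
    ((Nat.cast_le.2 hX).trans (Set.ncard_le_encard _))
  exact ⟨w, hw, card_wordImage_univ_le h3⟩
end
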